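/- Assume s = 4, q = p, p ∤ (m/t), d | h, and a ≠ 0. Set a_0 = −(m/t)·a^{−1} ∈ F_p^*, and Q_{t,4} = p^{(t−1)/4}·π_4^{(t−1)/2}·χ̄_4(−a_0)·i^{i_0} if t ≡ 1 (mod 4), Q_{t,4} = (−1)^f·p^{(t−3)/4}·π_4^{(t+1)/2}·χ_4(−a_0)·i^{i_0} if t ≡ 3 (mod 4). Then: if (d,l) = (1,1) then N_t = (1/4)·( p^{t−1} + (−1)^{i_0}·( p^{(t−1)/2}·ρ(a_0) + 2·Re Q_{t,4} ) ); if (d,l) = (1,2) then N_t = (1/4)·( p^{t−1} + (−1)^{i_0}·p^{(t−2)/4}·( p^{(t−2)/4} − 2·ρ(a_0)·Re(π_4^{t/2}·i^{i_0}) ) ); if (d,l) = (1,4) then N_t = (1/4)·( p^{t−1} + (−1)^{i_0}·p^{(t−4)/4}·( p^{t/4} + 2·Re(π_4^{t/2}·i^{i_0}) ) ); if (d,l) = (2,1) then N_t = (1/2)·( p^{t−1} + (−1)^{i_0}·p^{(t−1)/2}·ρ(a_0) ); if (d,l) = (2,2) then N_t = (1/2)·( p^{t−1} + (−1)^{i_0}·p^{(t−2)/2}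 ); if (d,l) = (4,1) then N_t = p^{t−1}. -/

import Mathlib

noncomputable section

open Complex Polynomial Classical

/-- `N_t(a,s,h)`: the number of elements `x` of the subfield `F_{q^t}` of `K = F_{q^m}`
with `Tr_{K/F}(x) = a` and `N_{K/F}(x) ∈ g^h·⟨g^s⟩`. -/
def NN (F K : Type*) [Field F] [Fintype F] [Field K] [Fintype K] [Algebra F K]
    (g : F) (s h t : ℕ) (a : F) : ℕ :=
  Nat.card {x : K // x ^ (Fintype.card F) ^ t = x ∧ Algebra.trace F K x = a ∧
    ∃ k : ℕ, Algebra.norm F x = g ^ (h + s * k)}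

/-!
Give a monic polynomial over `F = F_q` the weight that is `χ` of the product of its roots times
`ψ` of their sum. The associated `L`-series is the polynomial `1 + G(χ, ψ) u`, and comparing
Newton's identity for it with its Euler product gives the Hasse–Davenport relation. Fourier
inversion over the additive characters then evaluates the sum of `χ(N x)` over the `x ∈ F_{q^t}`
with trace `b ≠ 0` in terms of `G(χ, ψ) ^ t`; for quartic `χ` these powers are products of a Gauss
sum, powers of `q` and powers of the Jacobi sum `J(χ, χ)`.

For `q = p` the Gaussian integer `J(χ, χ)` has norm `p`. It is determined among the generators of
its prime ideal by being congruent to `(-1) ^ (f + 1)` modulo `2 - 2i`, and among the two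
conjugate primes by vanishing under the reduction `i ↦ g ^ f`; the element `π_4` satisfies both
conditions.

Finally, on `F_{q^t} ⊆ F_{q^m}` the trace and norm to `F` of `F_{q^m}` are `m/t` times,
respectively the `m/t`-th power of, those of `F_{q^t}`, so orthogonality of the characters of
order dividing `4` expresses `N_t` through these sums.
-/

section MonicPolynomials

variable (F : Type*) [Field F] [Finite F]

theorem finite_setOf_monic_natDegree_eq (n : ℕ) :
    {f : F[X] | f.Monic ∧ f.natDegree = n}.Finite := by
  have : Finite (degreeLT F (n + 1)) := Module.finite_of_finite F
  refine (Set.toFinite (degreeLT F (n + 1) : Set F[X])).subset fun f ⟨_, hf⟩ ↦ ?_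
  rw [SetLike.mem_coe, mem_degreeLT, ← hf]
  exact degree_le_natDegree.trans_lt (by exact_mod_cast Nat.lt_succ_self _)

/-- The monic polynomials of degree `n` over a finite field. -/
def monicOfDegree (n : ℕ) : Finset F[X] :=
  (finite_setOf_monic_natDegree_eq F n).toFinset

/-- The monic irreducible polynomials of degree dividing `k` (none for `k = 0`). These are the
minimal polynomials of the elements of the extension of degree `k`. -/
def monicIrreducibles (k : ℕ) : Finset F[X] :=
  {P ∈ k.divisors.biUnion (monicOfDegree F) | Irreducible P}

variable {F} {R : Type*} [CommRing R]

@[simp]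
theorem mem_monicOfDegree {n : ℕ} {f : F[X]} :
    f ∈ monicOfDegree F n ↔ f.Monic ∧ f.natDegree = n := by
  simp [monicOfDegree]

theorem mem_monicIrreducibles {k : ℕ} {P : F[X]} :
    P ∈ monicIrreducibles F k ↔ (P.Monic ∧ Irreducible P) ∧ P.natDegree ∣ k ∧ k ≠ 0 := by
  simp only [monicIrreducibles, Finset.mem_filter, Finset.mem_biUnion, mem_monicOfDegree,
    Nat.mem_divisors]
  grind

theorem monicOfDegree_zero : monicOfDegree F 0 = {1} := by
  ext f
  simp only [mem_monicOfDegree, Finset.mem_singleton]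
  exact ⟨fun ⟨hf, h0⟩ ↦ eq_one_of_monic_natDegree_zero hf h0, by rintro rfl; simp⟩

theorem X_mul_add_C_mem_monicOfDegree {n : ℕ} {f : F[X]} (hf : f ∈ monicOfDegree F n) (c : F) :
    X * f + C c ∈ monicOfDegree F (n + 1) := by
  obtain ⟨hm, rfl⟩ := mem_monicOfDegree.1 hf
  have hdeg : (X * f).natDegree = f.natDegree + 1 := natDegree_X_mul hm.ne_zero
  refine mem_monicOfDegree.2 ⟨(monic_X.mul hm).add_of_left (degree_C_le.trans_lt ?_), ?_⟩
  · exact natDegree_pos_iff_degree_pos.1 (by lia)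
  · rw [natDegree_add_C, hdeg]

theorem divX_mem_monicOfDegree {n : ℕ} {f : F[X]} (hf : f ∈ monicOfDegree F (n + 1)) :
    divX f ∈ monicOfDegree F n := by
  obtain ⟨hm, hn⟩ := mem_monicOfDegree.1 hf
  have hdeg : (divX f).natDegree = n := by rw [natDegree_divX_eq_natDegree_tsub_one, hn]; rfl
  refine mem_monicOfDegree.2 ⟨?_, hdeg⟩
  rw [Monic, leadingCoeff, hdeg, coeff_divX, ← hn]
  exact hm

theorem sum_monicOfDegree_succ [Fintype F] (n : ℕ) (w : F[X] → R) :
    ∑ f ∈ monicOfDegree F (n + 1), w f = ∑ f ∈ monicOfDegree F n, ∑ c, w (X * f + C c) := by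
  rw [← Finset.sum_product']
  refine Finset.sum_bij' (fun f _ ↦ (divX f, f.coeff 0)) (fun x _ ↦ X * x.1 + C x.2)
    (fun f hf ↦ ?_) (fun x hx ↦ ?_) (fun f _ ↦ ?_) (fun x _ ↦ ?_) (fun f _ ↦ ?_)
  · simpa only [Finset.mem_product, Finset.mem_univ, and_true] using divX_mem_monicOfDegree hf
  · exact X_mul_add_C_mem_monicOfDegree (Finset.mem_product.1 hx).1 _
  · rw [X_mul_divX_add]
  · have hdivX : divX (X * x.1 + C x.2) = x.1 := by ext; simp
    simp [hdivX]
  · rw [X_mul_divX_add]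

end MonicPolynomials

section NewtonIdentity

open UniqueFactorizationMonoid

variable {F : Type*} [Field F]

theorem pow_dvd_iff_le_count_normalizedFactors {f P : F[X]} (hf : f ≠ 0) (hP : P.Monic)
    (hPi : Irreducible P) (j : ℕ) : P ^ j ∣ f ↔ j ≤ (normalizedFactors f).count P := by
  rw [dvd_iff_normalizedFactors_le_normalizedFactors (pow_ne_zero _ hP.ne_zero) hf,
    normalizedFactors_pow, normalizedFactors_irreducible hPi, hP.normalize_eq_self,
    Multiset.nsmul_singleton, ← Multiset.le_count_iff_replicate_le]

theorem monic_of_mem_normalizedFactors {f P : F[X]} (hP : P ∈ normalizedFactors f) : P.Monic := by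
  rw [← normalize_normalized_factor P hP]
  exact monic_normalize (irreducible_of_normalized_factor P hP).ne_zero

theorem natDegree_eq_sum_count_normalizedFactors {f : F[X]} (hf : f.Monic) :
    f.natDegree = ∑ P ∈ (normalizedFactors f).toFinset,
      (normalizedFactors f).count P * P.natDegree := by
  have hprod : (normalizedFactors f).prod = f := by
    rw [prod_normalizedFactors_eq hf.ne_zero, hf.normalize_eq_self]
  conv_lhs => rw [← hprod]
  rw [natDegree_multiset_prod_of_monic _ fun P ↦ monic_of_mem_normalizedFactors,
    Finset.sum_multiset_map_count]
  simp only [smul_eq_mul]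

theorem card_multiples_div_le {n e c : ℕ} (he : 0 < e) (hc : c * e ≤ n) :
    (Finset.card {k ∈ Finset.Icc 1 n | e ∣ k ∧ k / e ≤ c}) = c := by
  have himage : {k ∈ Finset.Icc 1 n | e ∣ k ∧ k / e ≤ c} = (Finset.Icc 1 c).image (· * e) := by
    ext k
    simp only [Finset.mem_filter, Finset.mem_Icc, Finset.mem_image]
    constructor
    · rintro ⟨⟨hk, -⟩, hek, hkc⟩
      exact ⟨k / e, ⟨Nat.div_pos (Nat.le_of_dvd hk hek) he, hkc⟩, Nat.div_mul_cancel hek⟩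
    · rintro ⟨j, ⟨hj, hjc⟩, rfl⟩
      exact ⟨⟨Nat.mul_pos hj he, (Nat.mul_le_mul_right e hjc).trans hc⟩, dvd_mul_left e j,
        (Nat.mul_div_cancel j he).trans_le hjc⟩
  rw [himage, Finset.card_image_of_injective _ (mul_left_injective₀ he.ne'), Nat.card_Icc,
    Nat.add_sub_cancel]

theorem count_mul_natDegree_eq_sum {f P : F[X]} (hf : f ≠ 0) (hP : P.Monic)
    (hPi : Irreducible P) :
    (normalizedFactors f).count P * P.natDegree =
      ∑ k ∈ Finset.Icc 1 f.natDegree with P.natDegree ∣ k,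
        if P ^ (k / P.natDegree) ∣ f then P.natDegree else 0 := by
  have hle : (normalizedFactors f).count P * P.natDegree ≤ f.natDegree := by
    rw [← hP.natDegree_pow]
    exact natDegree_le_of_dvd ((pow_dvd_iff_le_count_normalizedFactors hf hP hPi _).2 le_rfl) hf
  simp_rw [pow_dvd_iff_le_count_normalizedFactors hf hP hPi]
  rw [← Finset.sum_filter, Finset.filter_filter, Finset.sum_const,
    card_multiples_div_le hPi.natDegree_pos hle, smul_eq_mul]

variable [Finite F]

theorem natDegree_eq_sum_monicIrreducibles {f : F[X]} (hf : f.Monic) :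
    f.natDegree = ∑ k ∈ Finset.Icc 1 f.natDegree, ∑ P ∈ monicIrreducibles F k,
      if P ^ (k / P.natDegree) ∣ f then P.natDegree else 0 := by
  set T := {P ∈ (Finset.Icc 1 f.natDegree).biUnion (monicOfDegree F) | Irreducible P}
  have hmem {P : F[X]} :
      P ∈ T ↔ (P.Monic ∧ Irreducible P) ∧ P.natDegree ∈ Finset.Icc 1 f.natDegree := by
    simp only [T, Finset.mem_filter, Finset.mem_biUnion, mem_monicOfDegree]
    grind
  have hsubset : (normalizedFactors f).toFinset ⊆ T := fun P hP ↦ by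
    rw [Multiset.mem_toFinset] at hP
    have hPi := irreducible_of_normalized_factor P hP
    exact hmem.2 ⟨⟨monic_of_mem_normalizedFactors hP, hPi⟩, Finset.mem_Icc.2
      ⟨hPi.natDegree_pos, natDegree_le_of_dvd (dvd_of_mem_normalizedFactors hP) hf.ne_zero⟩⟩
  calc f.natDegree = ∑ P ∈ T, (normalizedFactors f).count P * P.natDegree := by
        rw [natDegree_eq_sum_count_normalizedFactors hf]
        refine Finset.sum_subset hsubset fun P _ hP ↦ ?_
        rw [Multiset.mem_toFinset, ← Multiset.count_eq_zero] at hP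
        rw [hP, zero_mul]
    _ = ∑ P ∈ T, ∑ k ∈ Finset.Icc 1 f.natDegree with P.natDegree ∣ k,
        if P ^ (k / P.natDegree) ∣ f then P.natDegree else 0 :=
      Finset.sum_congr rfl fun P hP ↦
        count_mul_natDegree_eq_sum hf.ne_zero (hmem.1 hP).1.1 (hmem.1 hP).1.2
    _ = _ := Finset.sum_comm' fun P k ↦ by
        simp only [hmem, mem_monicIrreducibles, Finset.mem_filter, Finset.mem_Icc]
        constructor
        · rintro ⟨⟨hP, -⟩, ⟨hk, hkn⟩, hdvd⟩
          exact ⟨⟨hP, hdvd, by lia⟩, hk, hkn⟩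
        · rintro ⟨⟨hP, hdvd, -⟩, hk, hkn⟩
          exact ⟨⟨hP, hP.2.natDegree_pos, (Nat.le_of_dvd hk hdvd).trans hkn⟩, ⟨hk, hkn⟩, hdvd⟩

variable {R : Type*} [CommRing R] (w : F[X] → R)

/-- The coefficient of `uⁿ` in the `L`-series `∑ w(f) u ^ deg f` over monic polynomials `f`. -/
def monicSum (n : ℕ) : R := ∑ f ∈ monicOfDegree F n, w f

/-- The coefficient of `uᵏ` in `u L'(u) / L(u)`, where `L` is the Euler product
`∏ (1 - w(P) u ^ deg P)⁻¹` over monic irreducible polynomials `P`. -/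
def primePowerSum (k : ℕ) : R :=
  ∑ P ∈ monicIrreducibles F k, P.natDegree * w P ^ (k / P.natDegree)

variable {w}

theorem sum_monicOfDegree_dvd (hw : ∀ f g : F[X], f.Monic → g.Monic → w (f * g) = w f * w g)
    {Q : F[X]} (hQ : Q.Monic) {n : ℕ} (hn : Q.natDegree ≤ n) :
    ∑ f ∈ monicOfDegree F n with Q ∣ f, w f = w Q * monicSum w (n - Q.natDegree) := by
  rw [monicSum, Finset.mul_sum]
  refine (Finset.sum_bij (fun f _ ↦ Q * f) (fun f hf ↦ ?_) (fun _ _ _ _ ↦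
    mul_left_cancel₀ hQ.ne_zero) (fun f hf ↦ ?_) (fun f hf ↦ ?_)).symm
  · obtain ⟨hf, hdeg⟩ := mem_monicOfDegree.1 hf
    refine Finset.mem_filter.2 ⟨mem_monicOfDegree.2 ⟨hQ.mul hf, ?_⟩, dvd_mul_right Q f⟩
    rw [hQ.natDegree_mul hf, hdeg, Nat.add_sub_cancel' hn]
  · obtain ⟨hmem, g, rfl⟩ := Finset.mem_filter.1 hf
    obtain ⟨hQg, hdeg⟩ := mem_monicOfDegree.1 hmem
    have hg : g.Monic := hQ.of_mul_monic_left hQg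
    rw [hQ.natDegree_mul hg] at hdeg
    exact ⟨g, mem_monicOfDegree.2 ⟨hg, by lia⟩, rfl⟩
  · exact (hw Q f hQ (mem_monicOfDegree.1 hf).1).symm

theorem newton_identity_monicSum (hw1 : w 1 = 1)
    (hw : ∀ f g : F[X], f.Monic → g.Monic → w (f * g) = w f * w g) (n : ℕ) :
    n * monicSum w n = ∑ k ∈ Finset.Icc 1 n, primePowerSum w k * monicSum w (n - k) := by
  have hwpow (P : F[X]) (hP : P.Monic) (j : ℕ) : w (P ^ j) = w P ^ j := by
    induction j with
    | zero => rw [pow_zero, pow_zero, hw1]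
    | succ j ih => rw [pow_succ, hw _ _ (hP.pow j) hP, ih, pow_succ]
  have hmultiples (k : ℕ) (hk : k ≤ n) (P : F[X]) (hP : P ∈ monicIrreducibles F k) :
      ∑ f ∈ monicOfDegree F n with P ^ (k / P.natDegree) ∣ f, w f =
        w P ^ (k / P.natDegree) * monicSum w (n - k) := by
    obtain ⟨⟨hP, -⟩, hdvd, -⟩ := mem_monicIrreducibles.1 hP
    have hdeg : (P ^ (k / P.natDegree)).natDegree = k := by
      rw [hP.natDegree_pow, Nat.div_mul_cancel hdvd]
    rw [sum_monicOfDegree_dvd hw (hP.pow _) (hdeg.trans_le hk), hdeg, hwpow P hP]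
  calc n * monicSum w n
      = ∑ f ∈ monicOfDegree F n, ∑ k ∈ Finset.Icc 1 n, ∑ P ∈ monicIrreducibles F k,
          if P ^ (k / P.natDegree) ∣ f then P.natDegree * w f else 0 := by
        rw [monicSum, Finset.mul_sum]
        refine Finset.sum_congr rfl fun f hf ↦ ?_
        obtain ⟨hfm, rfl⟩ := mem_monicOfDegree.1 hf
        conv_lhs => rw [natDegree_eq_sum_monicIrreducibles hfm]
        push_cast
        simp_rw [Finset.sum_mul, ite_mul, zero_mul]
    _ = ∑ k ∈ Finset.Icc 1 n, ∑ P ∈ monicIrreducibles F k,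
          P.natDegree * ∑ f ∈ monicOfDegree F n with P ^ (k / P.natDegree) ∣ f, w f := by
        rw [Finset.sum_comm]
        refine Finset.sum_congr rfl fun k _ ↦ ?_
        rw [Finset.sum_comm]
        simp_rw [Finset.mul_sum, Finset.sum_filter]
    _ = _ := by
        refine Finset.sum_congr rfl fun k hk ↦ ?_
        rw [primePowerSum, Finset.sum_mul]
        refine Finset.sum_congr rfl fun P hP ↦ ?_
        rw [hmultiples k (Finset.mem_Icc.1 hk).2 P hP, mul_assoc]

end NewtonIdentity

section HasseDavenport

variable {F R : Type*} [Field F] [CommRing R] (χ : MulChar F R) (ψ : AddChar F R)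

/-- The weight whose `L`-series is `1 + gaussSum χ ψ * u`. On the minimal polynomial of a generator
of an extension it is the value of `χ` at the norm times that of `ψ` at the trace. -/
def charWeight (f : F[X]) : R := χ ((-1) ^ f.natDegree * f.coeff 0) * ψ (-f.nextCoeff)

theorem charWeight_one : charWeight χ ψ 1 = 1 := by
  simp [charWeight, nextCoeff]

theorem charWeight_mul {f g : F[X]} (hf : f.Monic) (hg : g.Monic) :
    charWeight χ ψ (f * g) = charWeight χ ψ f * charWeight χ ψ g := by
  unfold charWeight
  rw [hf.natDegree_mul hg, hf.nextCoeff_mul hg, mul_coeff_zero, neg_add, AddChar.map_add_eq_mul,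
    pow_add, mul_mul_mul_comm, map_mul, mul_mul_mul_comm]

theorem charWeight_minpoly_pow {L : Type*} [Field L] [Algebra F L] [FiniteDimensional F L] (x : L) :
    charWeight χ ψ (minpoly F x) ^ (Module.finrank F L / (minpoly F x).natDegree) =
      χ (Algebra.norm F x) * ψ (Algebra.trace F L x) := by
  have hx : IsIntegral F x := Algebra.IsIntegral.isIntegral x
  have hindex : Module.finrank F L / (minpoly F x).natDegree =
      Module.finrank (IntermediateField.adjoin F {x}) L := by
    rw [← Module.finrank_mul_finrank F (IntermediateField.adjoin F {x}) L,
      IntermediateField.adjoin.finrank hx, Nat.mul_div_cancel_left _ (minpoly.natDegree_pos hx)]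
  have hnorm : Algebra.norm F x = ((-1) ^ (minpoly F x).natDegree * (minpoly F x).coeff 0) ^
      Module.finrank (IntermediateField.adjoin F {x}) L := by
    have hgen := Algebra.PowerBasis.norm_gen_eq_coeff_zero_minpoly
      (IntermediateField.adjoin.powerBasis hx)
    rw [IntermediateField.adjoin.powerBasis_gen, IntermediateField.adjoin.powerBasis_dim,
      IntermediateField.minpoly_gen] at hgen
    rw [Algebra.norm_eq_norm_adjoin, hgen]
  rw [trace_eq_finrank_mul_minpoly_nextCoeff, hnorm, hindex, charWeight, map_pow, mul_pow,
    ← AddChar.map_nsmul_eq_pow, nsmul_eq_mul, mul_neg]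

variable [Finite F]

theorem monicSum_charWeight_zero : monicSum (charWeight χ ψ) 0 = 1 := by
  rw [monicSum, monicOfDegree_zero, Finset.sum_singleton, charWeight_one]

theorem monicSum_charWeight_one [Fintype F] : monicSum (charWeight χ ψ) 1 = gaussSum χ ψ := by
  rw [monicSum, sum_monicOfDegree_succ, monicOfDegree_zero, Finset.sum_singleton, gaussSum,
    ← Equiv.sum_comp (Equiv.neg F)]
  refine Finset.sum_congr rfl fun c _ ↦ ?_
  simp only [charWeight, mul_one, natDegree_X_add_C, nextCoeff_X_add_C, Equiv.neg_apply]
  simp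

theorem monicSum_charWeight_add_two [IsDomain R] (hχ : χ ≠ 1) (n : ℕ) :
    monicSum (charWeight χ ψ) (n + 2) = 0 := by
  cases nonempty_fintype F
  rw [monicSum, sum_monicOfDegree_succ]
  refine Finset.sum_eq_zero fun f hf ↦ ?_
  have hweight (c : F) : charWeight χ ψ (X * f + C c) =
      χ ((-1) ^ (n + 2)) * ψ (-f.coeff n) * χ c := by
    obtain ⟨-, hdeg⟩ := mem_monicOfDegree.1 (X_mul_add_C_mem_monicOfDegree hf c)
    have hnext : (X * f + C c).nextCoeff = f.coeff n := by
      rw [nextCoeff_of_natDegree_pos (by lia), hdeg]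
      simp
    rw [charWeight, hnext, hdeg, map_mul]
    simp [mul_right_comm]
  simp_rw [hweight]
  rw [← Finset.mul_sum, MulChar.sum_eq_zero_of_ne_one hχ, mul_zero]

theorem primePowerSum_charWeight [Fintype F] [IsDomain R] (hχ : χ ≠ 1) (n : ℕ) :
    primePowerSum (charWeight χ ψ) (n + 1) = (-1) ^ n * gaussSum χ ψ ^ (n + 1) := by
  have hnewton := newton_identity_monicSum (charWeight_one χ ψ) fun _ _ ↦ charWeight_mul χ ψ
  induction n with
  | zero => simpa [monicSum_charWeight_zero, monicSum_charWeight_one] using (hnewton 1).symm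
  | succ n ih =>
    have hlow : ∑ k ∈ Finset.Icc 1 n,
        primePowerSum (charWeight χ ψ) k * monicSum (charWeight χ ψ) (n + 2 - k) = 0 := by
      refine Finset.sum_eq_zero fun k hk ↦ ?_
      rw [Nat.sub_add_comm (Finset.mem_Icc.1 hk).2, monicSum_charWeight_add_two χ ψ hχ, mul_zero]
    have hsum := hnewton (n + 2)
    rw [monicSum_charWeight_add_two χ ψ hχ, mul_zero, Finset.sum_Icc_succ_top (by lia),
      Finset.sum_Icc_succ_top (by lia), hlow, zero_add, ih, Nat.sub_self,
      show n + 2 - (n + 1) = 1 by lia, monicSum_charWeight_one, monicSum_charWeight_zero] at hsum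
    linear_combination -hsum

theorem card_filter_minpoly_eq {L : Type*} [Field L] [Fintype L] [Algebra F L] {P : F[X]}
    (hP : P ∈ monicIrreducibles F (Module.finrank F L)) :
    Finset.card {x : L | minpoly F x = P} = P.natDegree := by
  cases nonempty_fintype F
  obtain ⟨⟨hPm, hPi⟩, hdvd, -⟩ := mem_monicIrreducibles.1 hP
  have hroots : ({x : L | minpoly F x = P} : Finset L) = (P.rootSet L).toFinset := by
    ext x
    simp only [Finset.mem_filter_univ, Set.mem_toFinset, mem_rootSet]
    refine ⟨?_, fun ⟨_, hx⟩ ↦ (minpoly.eq_of_irreducible_of_monic hPi hx hPm).symm⟩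
    rintro rfl
    exact ⟨hPi.ne_zero, minpoly.aeval F x⟩
  have hPsub : P ∣ X ^ Fintype.card L - X := by
    rw [Module.card_eq_pow_finrank (K := F), ← Nat.card_eq_fintype_card]
    exact hPi.natDegree_dvd_iff_dvd_X_pow_card_pow_sub_X.1 hdvd
  have hsplits : (P.map (algebraMap F L)).Splits :=
    (FiniteField.isSplittingField_sub L F).splits.of_dvd
      ((Polynomial.map_ne_zero_iff (algebraMap F L).injective).2
        (FiniteField.X_pow_card_sub_X_ne_zero F Fintype.one_lt_card)) (Polynomial.map_dvd _ hPsub)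
  rw [hroots, Set.toFinset_card,
    card_rootSet_eq_natDegree (PerfectField.separable_of_irreducible hPi) hsplits]

theorem sum_norm_trace_eq_primePowerSum {L : Type*} [Field L] [Fintype L] [Algebra F L] :
    ∑ x : L, χ (Algebra.norm F x) * ψ (Algebra.trace F L x) =
      primePowerSum (charWeight χ ψ) (Module.finrank F L) := by
  have hmap (x : L) (_ : x ∈ Finset.univ) :
      minpoly F x ∈ monicIrreducibles F (Module.finrank F L) :=
    have hx : IsIntegral F x := Algebra.IsIntegral.isIntegral x
    mem_monicIrreducibles.2
      ⟨⟨minpoly.monic hx, minpoly.irreducible hx⟩, minpoly.degree_dvd hx, Module.finrank_pos.ne'⟩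
  rw [primePowerSum, ← Finset.sum_fiberwise_of_maps_to hmap]
  refine Finset.sum_congr rfl fun P hP ↦ ?_
  rw [← card_filter_minpoly_eq hP, ← nsmul_eq_mul, ← Finset.sum_const]
  refine Finset.sum_congr rfl fun x hx ↦ ?_
  rw [card_filter_minpoly_eq hP, ← charWeight_minpoly_pow, (Finset.mem_filter_univ x).1 hx]

theorem hasse_davenport [Fintype F] {L : Type*} [Field L] [Fintype L] [Algebra F L] [IsDomain R]
    (hχ : χ ≠ 1) :
    ∑ x : L, χ (Algebra.norm F x) * ψ (Algebra.trace F L x) =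
      (-1) ^ (Module.finrank F L - 1) * gaussSum χ ψ ^ Module.finrank F L := by
  rw [sum_norm_trace_eq_primePowerSum]
  have hpos : Module.finrank F L ≠ 0 := Module.finrank_pos.ne'
  obtain ⟨n, hn⟩ := Nat.exists_eq_succ_of_ne_zero hpos
  rw [hn]
  exact primePowerSum_charWeight χ ψ hχ n

end HasseDavenport

section TraceNormSums

variable {F R : Type*} [Field F] [CommRing R]

/-- The sum of `χ ∘ N_{L/F}` over the elements of `L` of trace `b` over `F`. -/
def traceNormSum (L : Type*) [Field L] [Fintype L] [Algebra F L] (χ : MulChar F R) (b : F) : R :=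
  ∑ y : L with Algebra.trace F L y = b, χ (Algebra.norm F y)

variable {L : Type*} [Field L] [Fintype L] [Algebra F L]

theorem traceNormSum_inv [Finite F] (χ : MulChar F ℂ) (b : F) :
    traceNormSum L χ⁻¹ b = star (traceNormSum L χ b) := by
  simp only [traceNormSum, star_sum, MulChar.star_apply']

theorem card_filter_trace_eq [Fintype F] (b : F) :
    Finset.card {y : L | Algebra.trace F L y = b} =
      Fintype.card F ^ (Module.finrank F L - 1) := by
  have hfiber (c : F) : Finset.card {y : L | Algebra.trace F L y = c} =
      Finset.card {y : L | Algebra.trace F L y = b} :=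
    AddMonoidHom.card_fiber_eq_of_mem_range (Algebra.trace F L : L →+ F)
      (Algebra.trace_surjective F L c) (Algebra.trace_surjective F L b)
  have htotal : Fintype.card L =
      Fintype.card F * Finset.card {y : L | Algebra.trace F L y = b} := by
    rw [← Finset.card_univ, Finset.card_eq_sum_card_fiberwise (f := Algebra.trace F L)
      (t := Finset.univ) fun _ _ ↦ Finset.mem_coe.2 (Finset.mem_univ _),
      Finset.sum_congr rfl fun c _ ↦ hfiber c, Finset.sum_const, Finset.card_univ, smul_eq_mul]
  have hpos : 0 < Module.finrank F L := Module.finrank_pos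
  rw [Module.card_eq_pow_finrank (K := F), ← Nat.sub_add_cancel hpos, pow_succ'] at htotal
  exact (Nat.eq_of_mul_eq_mul_left Fintype.card_pos htotal).symm

theorem traceNormSum_one [Fintype F] {b : F} (hb : b ≠ 0) :
    traceNormSum L (1 : MulChar F R) b = (Fintype.card F : R) ^ (Module.finrank F L - 1) := by
  have hterm (y : L) (hy : y ∈ ({y : L | Algebra.trace F L y = b} : Finset L)) :
      (1 : MulChar F R) (Algebra.norm F y) = 1 := by
    refine MulChar.one_apply (isUnit_iff_ne_zero.2 (Algebra.norm_ne_zero_iff.2 ?_))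
    rintro rfl
    exact hb (((Finset.mem_filter_univ _).1 hy).symm.trans (map_zero _))
  rw [traceNormSum, Finset.sum_congr rfl hterm, Finset.sum_const, card_filter_trace_eq,
    nsmul_one, Nat.cast_pow]

variable [Fintype F] [IsDomain R] {χ : MulChar F R} {ψ : AddChar F R}

theorem sum_norm_mul_trace (hχ : χ ≠ 1) (c : F) :
    ∑ y : L, χ (Algebra.norm F y) * ψ (c * Algebra.trace F L y) =
      (-1) ^ (Module.finrank F L - 1) * gaussSum χ ψ ^ Module.finrank F L *
        (χ⁻¹ ^ Module.finrank F L) c := by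
  have hpos : Module.finrank F L ≠ 0 := Module.finrank_pos.ne'
  have hHD := hasse_davenport (L := L) χ (ψ.mulShift c) hχ
  simp only [AddChar.mulShift_apply] at hHD
  rw [hHD, mul_assoc, MulChar.pow_apply' _ hpos, ← mul_pow]
  rcases eq_or_ne c 0 with rfl | hc
  · rw [AddChar.mulShift_zero, gaussSum_one_right hχ, MulChar.map_zero, mul_zero]
  · have hshift := gaussSum_mulShift_eq χ ψ (Units.mk0 c hc)
    rw [Units.val_mk0] at hshift
    rw [hshift, mul_comm (gaussSum χ ψ)]

theorem card_mul_traceNormSum (hχ : χ ≠ 1) (hψ : ψ.IsPrimitive) {b : F} (hb : b ≠ 0) :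
    Fintype.card F * traceNormSum L χ b =
      (-1) ^ (Module.finrank F L - 1) * gaussSum χ ψ ^ Module.finrank F L *
        ((χ ^ Module.finrank F L) (-b) * gaussSum (χ⁻¹ ^ Module.finrank F L) ψ) := by
  have hdetect (y : L) : ∑ c, ψ (c * (Algebra.trace F L y - b)) =
      if Algebra.trace F L y = b then (Fintype.card F : R) else 0 := by
    rw [AddChar.sum_mulShift _ hψ]
    simp only [sub_eq_zero, Nat.cast_ite, Nat.cast_zero]
  have hshift := gaussSum_mulShift_eq (χ⁻¹ ^ Module.finrank F L) ψ
    (Units.mk0 (-b) (neg_ne_zero.2 hb))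
  rw [Units.val_mk0, inv_pow, inv_inv, ← inv_pow] at hshift
  rw [← hshift]
  calc Fintype.card F * traceNormSum L χ b
      = ∑ y : L, χ (Algebra.norm F y) * ∑ c, ψ (c * (Algebra.trace F L y - b)) := by
        simp_rw [hdetect, mul_ite, mul_zero]
        rw [← Finset.sum_filter, ← Finset.sum_mul, traceNormSum, mul_comm]
    _ = ∑ c, ψ (-b * c) *
          ∑ y : L, χ (Algebra.norm F y) * ψ (c * Algebra.trace F L y) := by
        simp_rw [Finset.mul_sum]
        rw [Finset.sum_comm]
        refine Finset.sum_congr rfl fun c _ ↦ Finset.sum_congr rfl fun y _ ↦ ?_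
        rw [mul_sub, sub_eq_neg_add, mul_comm c b, ← neg_mul, AddChar.map_add_eq_mul]
        exact mul_left_comm _ _ _
    _ = _ := by
        simp_rw [sum_norm_mul_trace hχ, gaussSum, Finset.mul_sum, AddChar.mulShift_apply]
        exact Finset.sum_congr rfl fun c _ ↦ by ring

end TraceNormSums

section GaussSums

theorem mulChar_neg_apply {S R : Type*} [CommRing S] [CommRing R] (χ : MulChar S R) (b : S) :
    χ (-b) = χ (-1) * χ b := by
  rw [← map_mul, neg_one_mul]

theorem mulChar_neg_one_sq {S R : Type*} [CommRing S] [CommRing R] (χ : MulChar S R) :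
    χ (-1) ^ 2 = 1 := by
  rw [← map_pow, neg_one_sq, map_one]

theorem ne_one_of_isPrimitive {S R : Type*} [CommRing S] [Nontrivial S] [CommMonoid R]
    {ψ : AddChar S R} (hψ : ψ.IsPrimitive) : ψ ≠ 1 := by
  simpa only [AddChar.mulShift_one] using hψ one_ne_zero

variable {F R : Type*} [Field F] [Fintype F] [CommRing R] [IsDomain R] {χ : MulChar F R}
  {ψ : AddChar F R}

theorem gaussSum_mul_gaussSum_inv (hχ : χ ≠ 1) (hψ : ψ.IsPrimitive) :
    gaussSum χ ψ * gaussSum χ⁻¹ ψ = χ (-1) * Fintype.card F := by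
  have hcard := gaussSum_mul_gaussSum_eq_card hχ hψ
  have hinv := mul_gaussSum_inv_eq_gaussSum χ⁻¹ ψ
  rw [MulChar.inv_apply', inv_neg_one] at hinv
  linear_combination χ (-1) * hcard - gaussSum χ ψ * hinv

theorem gaussSum_sq_of_sq_ne_one (hχ : χ ^ 2 ≠ 1) :
    gaussSum χ ψ ^ 2 = jacobiSum χ χ * gaussSum (χ ^ 2) ψ := by
  rw [sq χ] at hχ ⊢
  rw [sq, ← jacobiSum_mul_nontrivial hχ, mul_comm]

theorem gaussSum_sq_sq (hχ4 : χ ^ 4 = 1) (hχ2 : χ ^ 2 ≠ 1) (hψ : ψ.IsPrimitive) :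
    gaussSum (χ ^ 2) ψ ^ 2 = Fintype.card F := by
  have hsq : (χ ^ 2) ^ 2 = 1 := by rw [← pow_mul, hχ4]
  rw [gaussSum_sq hχ2 (MulChar.isQuadratic_iff_sq_eq_one.2 hsq) hψ,
    MulChar.pow_apply' _ two_ne_zero, mulChar_neg_one_sq, one_mul]

theorem gaussSum_pow_four_mul (hχ4 : χ ^ 4 = 1) (hχ2 : χ ^ 2 ≠ 1) (hψ : ψ.IsPrimitive) (k : ℕ) :
    gaussSum χ ψ ^ (4 * k) = jacobiSum χ χ ^ (2 * k) * (Fintype.card F : R) ^ k := by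
  have hfour : gaussSum χ ψ ^ 4 = jacobiSum χ χ ^ 2 * Fintype.card F := by
    rw [pow_mul _ 2 2, gaussSum_sq_of_sq_ne_one hχ2, mul_pow, gaussSum_sq_sq hχ4 hχ2 hψ]
  rw [pow_mul, hfour, mul_pow, ← pow_mul]

end GaussSums

section Evaluation

variable {F : Type*} [Field F] [Fintype F] {L : Type*} [Field L] [Fintype L] [Algebra F L]
  {b : F} {k : ℕ}

theorem exists_isPrimitive_addChar_complex (F : Type*) [Field F] [Finite F] :
    ∃ ψ : AddChar F ℂ, ψ.IsPrimitive :=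
  ⟨_, AddChar.FiniteField.primitiveChar_to_Complex_isPrimitive F⟩

theorem card_ne_zero_complex (F : Type*) [Field F] [Fintype F] : (Fintype.card F : ℂ) ≠ 0 :=
  Nat.cast_ne_zero.2 Fintype.card_ne_zero

section Quadratic

variable {ρ : MulChar F ℂ}

theorem traceNormSum_quadratic_odd (hρ : ρ ≠ 1) (hρ2 : ρ ^ 2 = 1) (hb : b ≠ 0)
    (hL : Module.finrank F L = 2 * k + 1) :
    traceNormSum L ρ b = (ρ (-1) * Fintype.card F) ^ k * ρ b := by
  obtain ⟨ψ, hψ⟩ := exists_isPrimitive_addChar_complex F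
  have hinv : ρ⁻¹ = ρ := inv_eq_of_mul_eq_one_left (by rwa [← sq])
  have hg := gaussSum_sq hρ (MulChar.isQuadratic_iff_sq_eq_one.2 hρ2) hψ
  have hsum := card_mul_traceNormSum (L := L) hρ hψ hb
  rw [hL, hinv, pow_succ ρ, pow_mul ρ, hρ2, one_pow, one_mul, mulChar_neg_apply, pow_succ,
    pow_mul _ 2 k, hg, Nat.add_sub_cancel, pow_mul, neg_one_sq, one_pow, one_mul] at hsum
  apply mul_left_cancel₀ (card_ne_zero_complex F)
  linear_combination hsum + (ρ (-1) * Fintype.card F) ^ k * ρ (-1) * ρ b * hg +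
    (ρ (-1) * Fintype.card F) ^ k * Fintype.card F * ρ b * mulChar_neg_one_sq ρ

theorem traceNormSum_quadratic_even (hρ : ρ ≠ 1) (hρ2 : ρ ^ 2 = 1) (hb : b ≠ 0)
    (hL : Module.finrank F L = 2 * k + 2) :
    traceNormSum L ρ b = (ρ (-1) * Fintype.card F) ^ k * ρ (-1) := by
  obtain ⟨ψ, hψ⟩ := exists_isPrimitive_addChar_complex F
  have hg := gaussSum_sq hρ (MulChar.isQuadratic_iff_sq_eq_one.2 hρ2) hψ
  have hsum := card_mul_traceNormSum (L := L) hρ hψ hb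
  have hsign : (-1 : ℂ) ^ (2 * k + 2 - 1) = -1 := Odd.neg_one_pow ⟨k, by lia⟩
  have htwo : 2 * k + 2 = 2 * (k + 1) := by ring
  rw [hL, hsign, htwo, inv_pow, pow_mul ρ, hρ2, one_pow, inv_one,
    gaussSum_one_left (ne_one_of_isPrimitive hψ), MulChar.one_apply (neg_ne_zero.2 hb).isUnit,
    pow_mul, hg] at hsum
  apply mul_left_cancel₀ (card_ne_zero_complex F)
  linear_combination hsum

end Quadratic

section Quartic

variable {χ : MulChar F ℂ}

theorem traceNormSum_quartic_one (hχ4 : χ ^ 4 = 1) (hχ2 : χ ^ 2 ≠ 1) (hb : b ≠ 0)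
    (hL : Module.finrank F L = 4 * k + 1) :
    traceNormSum L χ b = Fintype.card F ^ k * jacobiSum χ χ ^ (2 * k) * χ b := by
  obtain ⟨ψ, hψ⟩ := exists_isPrimitive_addChar_complex F
  have hχ : χ ≠ 1 := by rintro rfl; exact hχ2 (one_pow 2)
  have hsum := card_mul_traceNormSum (L := L) hχ hψ hb
  have hsign : (-1 : ℂ) ^ (4 * k + 1 - 1) = 1 := Even.neg_one_pow ⟨2 * k, by lia⟩
  rw [hL, hsign, inv_pow, pow_succ χ, pow_mul χ, hχ4, one_pow, one_mul χ, mulChar_neg_apply,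
    pow_succ, gaussSum_pow_four_mul hχ4 hχ2 hψ] at hsum
  apply mul_left_cancel₀ (card_ne_zero_complex F)
  linear_combination hsum + jacobiSum χ χ ^ (2 * k) * Fintype.card F ^ k * χ b *
    (χ (-1) * gaussSum_mul_gaussSum_inv hχ hψ + Fintype.card F * mulChar_neg_one_sq χ)

theorem traceNormSum_quartic_two (hχ4 : χ ^ 4 = 1) (hχ2 : χ ^ 2 ≠ 1) (hb : b ≠ 0)
    (hL : Module.finrank F L = 4 * k + 2) :
    traceNormSum L χ b = -(Fintype.card F ^ k * jacobiSum χ χ ^ (2 * k + 1) * (χ ^ 2) b) := by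
  obtain ⟨ψ, hψ⟩ := exists_isPrimitive_addChar_complex F
  have hχ : χ ≠ 1 := by rintro rfl; exact hχ2 (one_pow 2)
  have hsum := card_mul_traceNormSum (L := L) hχ hψ hb
  have hinv : (χ ^ 2)⁻¹ = χ ^ 2 := inv_eq_of_mul_eq_one_left (by rw [← pow_add, hχ4])
  have hneg : (χ ^ 2) (-b) = (χ ^ 2) b := by
    rw [mulChar_neg_apply, MulChar.pow_apply' χ two_ne_zero (-1), mulChar_neg_one_sq, one_mul]
  have hsign : (-1 : ℂ) ^ (4 * k + 2 - 1) = -1 := Odd.neg_one_pow ⟨2 * k, by lia⟩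
  rw [hL, hsign, inv_pow, pow_add χ, pow_mul χ, hχ4, one_pow, one_mul, hinv, hneg, pow_add,
    gaussSum_pow_four_mul hχ4 hχ2 hψ, gaussSum_sq_of_sq_ne_one hχ2] at hsum
  apply mul_left_cancel₀ (card_ne_zero_complex F)
  linear_combination hsum - jacobiSum χ χ ^ (2 * k + 1) * Fintype.card F ^ k * (χ ^ 2) b *
    gaussSum_sq_sq hχ4 hχ2 hψ

theorem traceNormSum_quartic_three (hχ4 : χ ^ 4 = 1) (hχ2 : χ ^ 2 ≠ 1) (hb : b ≠ 0)
    (hL : Module.finrank F L = 4 * k + 3) :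
    traceNormSum L χ b =
      χ (-1) * Fintype.card F ^ k * jacobiSum χ χ ^ (2 * k + 2) * χ⁻¹ b := by
  obtain ⟨ψ, hψ⟩ := exists_isPrimitive_addChar_complex F
  have hχ : χ ≠ 1 := by rintro rfl; exact hχ2 (one_pow 2)
  have hsum := card_mul_traceNormSum (L := L) hχ hψ hb
  have hcube : χ ^ 3 = χ⁻¹ := eq_inv_of_mul_eq_one_left (by rw [← pow_succ, hχ4])
  have hneg : χ⁻¹ (-b) = χ (-1) * χ⁻¹ b := by
    rw [mulChar_neg_apply, MulChar.inv_apply' χ (-1), inv_neg_one]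
  have hsign : (-1 : ℂ) ^ (4 * k + 3 - 1) = 1 := Even.neg_one_pow ⟨2 * k + 1, by lia⟩
  rw [hL, hsign, inv_pow, pow_add χ, pow_mul χ, hχ4, one_pow, one_mul (χ ^ 3), hcube, inv_inv,
    hneg] at hsum
  apply mul_left_cancel₀ (card_ne_zero_complex F)
  linear_combination hsum + χ (-1) * χ⁻¹ b * gaussSum_pow_four_mul hχ4 hχ2 hψ (k + 1)

theorem traceNormSum_quartic_four (hχ4 : χ ^ 4 = 1) (hχ2 : χ ^ 2 ≠ 1) (hb : b ≠ 0)
    (hL : Module.finrank F L = 4 * k + 4) :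
    traceNormSum L χ b = Fintype.card F ^ k * jacobiSum χ χ ^ (2 * k + 2) := by
  obtain ⟨ψ, hψ⟩ := exists_isPrimitive_addChar_complex F
  have hχ : χ ≠ 1 := by rintro rfl; exact hχ2 (one_pow 2)
  have hsum := card_mul_traceNormSum (L := L) hχ hψ hb
  have hsign : (-1 : ℂ) ^ (4 * k + 4 - 1) = -1 := Odd.neg_one_pow ⟨2 * k + 1, by lia⟩
  have hfour : 4 * k + 4 = 4 * (k + 1) := by ring
  rw [hL, hsign, hfour, inv_pow, pow_mul χ, hχ4, one_pow, inv_one,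
    gaussSum_one_left (ne_one_of_isPrimitive hψ), MulChar.one_apply (neg_ne_zero.2 hb).isUnit,
    gaussSum_pow_four_mul hχ4 hχ2 hψ] at hsum
  apply mul_left_cancel₀ (card_ne_zero_complex F)
  linear_combination hsum

end Quartic

end Evaluation

section Generator

variable {F : Type*} [Field F] [Finite F] {g : Fˣ} (hg : ∀ u, u ∈ Subgroup.zpowers g)
include hg

theorem exists_pow_eq_of_ne_zero {x : F} (hx : x ≠ 0) : ∃ n : ℕ, (g : F) ^ n = x := by
  obtain ⟨n, hn⟩ := mem_powers_iff_mem_zpowers.2 (hg (Units.mk0 x hx))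
  exact ⟨n, by simpa using congrArg Units.val hn⟩

theorem map_mulChar_eq_pow {R : Type*} [CommRing R] {χ : MulChar F R} {φ : R →+* F} {m : ℕ}
    (hm : m ≠ 0) (h : φ (χ g) = (g : F) ^ m) (x : F) : φ (χ x) = x ^ m := by
  rcases eq_or_ne x 0 with rfl | hx
  · rw [χ.map_zero, map_zero, zero_pow hm]
  · obtain ⟨n, rfl⟩ := exists_pow_eq_of_ne_zero hg hx
    rw [map_pow, map_pow, h, pow_right_comm]

theorem one_sub_dvd_one_sub_mulChar {R : Type*} [CommRing R] {χ : MulChar F R} {x : F}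
    (hx : x ≠ 0) : 1 - χ g ∣ 1 - χ x := by
  obtain ⟨n, rfl⟩ := exists_pow_eq_of_ne_zero hg hx
  rw [map_pow]
  exact one_sub_dvd_one_sub_pow _ n

end Generator

section QuadraticCharacter

/-- The quadratic character of a finite field with values in an arbitrary commutative ring. -/
def quadraticMulChar (F R : Type*) [Field F] [Fintype F] [DecidableEq F] [CommRing R] :
    MulChar F R :=
  (quadraticChar F).ringHomComp (Int.castRingHom R)

variable {F R : Type*} [Field F] [Fintype F] [DecidableEq F] [CommRing R]

theorem quadraticMulChar_apply (x : F) : quadraticMulChar F R x = (quadraticChar F x : R) :=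
  rfl

theorem sum_comp_sq (hF : ringChar F ≠ 2) (G : F → R) :
    ∑ u, G (u ^ 2) = ∑ y, (quadraticMulChar F R y + 1) * G y := by
  rw [← Finset.sum_fiberwise (g := fun u : F ↦ u ^ 2)]
  refine Finset.sum_congr rfl fun y _ ↦ ?_
  have hcard : ((Finset.univ.filter fun u : F ↦ u ^ 2 = y).card : ℤ) = quadraticChar F y + 1 := by
    rw [← quadraticChar_card_sqrts hF, Set.toFinset_ofPred]
  rw [Finset.sum_congr rfl (g := fun _ ↦ G y) fun u hu ↦ by rw [(Finset.mem_filter.1 hu).2],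
    Finset.sum_const, nsmul_eq_mul, ← Int.cast_natCast, hcard, Int.cast_add, Int.cast_one,
    quadraticMulChar_apply]

theorem jacobiSum_quadraticMulChar [IsDomain R] (hF : ringChar F ≠ 2) {χ : MulChar F R}
    (hχ : χ ≠ 1) : jacobiSum χ (quadraticMulChar F R) = χ 4 * jacobiSum χ χ := by
  have h2 : (2 : F) ≠ 0 := Ring.two_ne_zero hF
  have hsum : ∑ y, χ (1 - y) = 0 := by
    rw [← MulChar.sum_eq_zero_of_ne_one hχ]
    exact (Equiv.subLeft 1).sum_comp χ
  calc jacobiSum χ (quadraticMulChar F R)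
      = ∑ y, (quadraticMulChar F R y + 1) * χ (1 - y) := by
        simp_rw [add_mul, one_mul, Finset.sum_add_distrib, hsum, add_zero, jacobiSum_comm χ,
          jacobiSum]
    _ = ∑ u : F, χ (1 - u ^ 2) := (sum_comp_sq hF fun y ↦ χ (1 - y)).symm
    _ = ∑ x : F, χ (1 - (2 * x - 1) ^ 2) :=
        (((Equiv.mulLeft₀ 2 h2).trans (Equiv.subRight 1)).sum_comp fun u ↦ χ (1 - u ^ 2)).symm
    _ = χ 4 * jacobiSum χ χ := by
        rw [jacobiSum, Finset.mul_sum]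
        refine Finset.sum_congr rfl fun x _ ↦ ?_
        rw [← map_mul, ← map_mul]
        ring_nf

variable {g : Fˣ} (hg : ∀ u, u ∈ Subgroup.zpowers g)
include hg

theorem quadraticChar_generator (hF : ringChar F ≠ 2) : quadraticChar F (g : F) = -1 := by
  refine quadraticChar_neg_one_iff_not_isSquare.2 fun hsq ↦ ?_
  obtain ⟨x, hx⟩ := FiniteField.exists_nonsquare hF
  have hx0 : x ≠ 0 := fun h ↦ hx (h ▸ IsSquare.zero)
  obtain ⟨n, rfl⟩ := exists_pow_eq_of_ne_zero hg hx0
  exact hx (hsq.pow n)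

theorem sq_eq_quadraticMulChar (hF : ringChar F ≠ 2) {χ : MulChar F R} (hχ : χ g ^ 2 = -1) :
    χ ^ 2 = quadraticMulChar F R := by
  rw [MulChar.eq_iff hg, MulChar.pow_apply_coe, hχ, quadraticMulChar_apply,
    quadraticChar_generator hg hF, Int.cast_neg, Int.cast_one]

end QuadraticCharacter

theorem generator_pow_card_div_two {F : Type*} [Field F] [Fintype F] {g : Fˣ}
    (hg : ∀ u, u ∈ Subgroup.zpowers g) (hF : ringChar F ≠ 2) :
    (g : F) ^ (Fintype.card F / 2) = -1 := by
  rw [← quadraticChar_eq_pow_of_char_ne_two' hF, quadraticChar_generator hg hF, Int.cast_neg,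
    Int.cast_one]

section JacobiSums

variable {F R : Type*} [Field F] [Fintype F] [CommRing R]

theorem sum_pow_mul_one_sub_pow {m n : ℕ} (h : m + n < Fintype.card F - 1) :
    ∑ x : F, x ^ m * (1 - x) ^ n = 0 := by
  have hexpand (x : F) : x ^ m * (1 - x) ^ n =
      ∑ k ∈ Finset.range (n + 1), (-1) ^ k * (n.choose k : F) * x ^ (m + k) := by
    rw [sub_eq_neg_add, add_pow, Finset.mul_sum]
    refine Finset.sum_congr rfl fun k _ ↦ ?_
    rw [neg_pow]
    ring
  simp_rw [hexpand]
  rw [Finset.sum_comm]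
  refine Finset.sum_eq_zero fun k hk ↦ ?_
  have hk := Finset.mem_range.1 hk
  rw [← Finset.mul_sum, FiniteField.sum_pow_lt_card_sub_one _ _ (by omega), mul_zero]

variable {χ ψ : MulChar F R} {g : Fˣ} (hg : ∀ u, u ∈ Subgroup.zpowers g)
include hg

theorem map_jacobiSum_eq_zero {φ : R →+* F} {m n : ℕ} (hm : m ≠ 0) (hn : n ≠ 0)
    (h : m + n < Fintype.card F - 1) (hχ : φ (χ g) = (g : F) ^ m) (hψ : φ (ψ g) = (g : F) ^ n) :
    φ (jacobiSum χ ψ) = 0 := by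
  rw [jacobiSum, map_sum, ← sum_pow_mul_one_sub_pow h]
  refine Finset.sum_congr rfl fun x _ ↦ ?_
  rw [map_mul, map_mulChar_eq_pow hg hm hχ, map_mulChar_eq_pow hg hn hψ]

theorem one_sub_mul_one_sub_dvd_card_add_jacobiSum [IsDomain R] (hχ : χ ≠ 1) (hψ : ψ ≠ 1) :
    (1 - χ g) * (1 - ψ g) ∣ (Fintype.card F : R) + jacobiSum χ ψ := by
  have hsum : (Fintype.card F : R) + jacobiSum χ ψ = ∑ x, (1 - χ x) * (1 - ψ (1 - x)) := by
    have hψ' : ∑ x, ψ (1 - x) = 0 := by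
      rw [← MulChar.sum_eq_zero_of_ne_one hψ]
      exact (Equiv.subLeft 1).sum_comp ψ
    simp_rw [sub_mul, mul_sub, one_mul, mul_one, Finset.sum_sub_distrib, hψ',
      MulChar.sum_eq_zero_of_ne_one hχ, Finset.sum_const, Finset.card_univ, nsmul_eq_mul, jacobiSum]
    ring
  rw [hsum]
  refine Finset.dvd_sum fun x _ ↦ ?_
  rcases eq_or_ne x 0 with rfl | h0
  · simp
  rcases eq_or_ne x 1 with rfl | h1
  · simp
  · exact mul_dvd_mul (one_sub_dvd_one_sub_mulChar hg h0)
      (one_sub_dvd_one_sub_mulChar hg (sub_ne_zero.2 h1.symm))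

end JacobiSums

section GaussianIntegers

theorem associated_of_map_eq_zero {R S : Type*} [CommRing R] [IsBezout R] [CommRing S]
    [Nontrivial S] (φ : R →+* S) {x y : R} (hx : Irreducible x) (hy : Irreducible y)
    (hφx : φ x = 0) (hφy : φ y = 0) : Associated x y := by
  refine hx.associated_of_dvd hy (hx.dvd_iff_not_isCoprime.2 fun h ↦ ?_)
  have := h.map φ
  rw [hφx, hφy, isCoprime_zero_left] at this
  exact not_isUnit_zero this

theorem irreducible_of_prime_norm {d : ℤ} {z : ℤ√d} (hz : Prime z.norm) : Irreducible z := by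
  have hunit {w : ℤ√d} (hw : IsUnit w.norm) : IsUnit w :=
    Zsqrtd.norm_eq_one_iff.1 (Int.isUnit_iff_natAbs_eq.1 hw)
  refine ⟨fun h ↦ hz.not_isUnit ?_, fun x y hxy ↦ ?_⟩
  · exact Int.isUnit_iff_natAbs_eq.2 (Zsqrtd.norm_eq_one_iff.2 h)
  · rw [hxy, Zsqrtd.norm_mul] at hz
    exact (hz.irreducible.isUnit_or_isUnit rfl).imp hunit hunit

/-- A Gaussian integer is primary if it is congruent to `1` modulo `2 - 2i = -i (1 + i) ^ 3`.
This singles out one generator of every ideal coprime to `2`. -/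
def IsPrimary (z : GaussianInt) : Prop :=
  (⟨2, -2⟩ : GaussianInt) ∣ z - 1

theorem IsPrimary.eq_of_associated {z w : GaussianInt} (hz : IsPrimary z) (hw : IsPrimary w)
    (h : Associated z w) : z = w := by
  obtain ⟨u, rfl⟩ := h
  have hnorm : (u : GaussianInt).norm = 1 := (Zsqrtd.norm_eq_one_iff' (by norm_num) _).2 u.isUnit
  obtain ⟨c, hc⟩ : (⟨2, -2⟩ : GaussianInt) ∣ u - 1 := by
    have := dvd_sub hw (hz.mul_right u)
    rwa [show z * u - 1 - (z - 1) * u = u - 1 by ring] at this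
  have hu : (u : GaussianInt) = 1 := by
    rw [Zsqrtd.ext_iff] at hc
    simp only [Zsqrtd.norm_def, Zsqrtd.re_sub, Zsqrtd.im_sub, Zsqrtd.re_one, Zsqrtd.im_one,
      Zsqrtd.re_mul, Zsqrtd.im_mul] at hnorm hc
    have him : (u : GaussianInt).im = 0 := by
      have : (u : GaussianInt).im < 2 := by nlinarith
      have : -2 < (u : GaussianInt).im := by nlinarith
      omega
    have hre : (u : GaussianInt).re = 1 := by
      have : (u : GaussianInt).re < 2 := by nlinarith
      have : -2 < (u : GaussianInt).re := by nlinarith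
      omega
    exact Zsqrtd.ext hre him
  rw [hu, mul_one]

theorem isPrimary_mk {c d : ℤ} (hd : 2 ∣ d) (hcd : 4 ∣ c + d - 1) : IsPrimary ⟨c, d⟩ := by
  obtain ⟨u, rfl⟩ := hd
  obtain ⟨v, hv⟩ := hcd
  refine ⟨⟨v - u, v⟩, Zsqrtd.ext ?_ ?_⟩ <;> simp <;> linarith

theorem isPrimary_neg_of_norm_eq {a b : ℤ} {f : ℕ} (hab : a ^ 2 + b ^ 2 = 4 * f + 1)
    (ha : a ≡ -(-1) ^ f [ZMOD 4]) : IsPrimary (-⟨a, b⟩) := by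
  have ha2 : a % 2 = 1 := by
    rcases neg_one_pow_eq_or ℤ f with h | h <;> rw [h, Int.ModEq] at ha <;> omega
  obtain ⟨e, rfl⟩ : ∃ e, a = 2 * e + 1 := ⟨a / 2, by omega⟩
  obtain ⟨c, rfl⟩ : Even b := by
    rw [← Int.even_pow' two_ne_zero, show b ^ 2 = 2 * (2 * (f - e ^ 2 - e)) by linarith]
    exact even_two_mul _
  have hc : c % 2 = f % 2 := by
    obtain ⟨r, hr⟩ := Int.even_mul_succ_self e
    obtain ⟨s, hs⟩ := Int.even_mul_succ_self c
    have hf : s + s - c + (r + r) = f := by linarith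
    omega
  refine isPrimary_mk (c := -(2 * e + 1)) (d := -(c + c)) (by omega) ?_
  rcases f.even_or_odd with h | h <;> rw [h.neg_one_pow, Int.ModEq] at ha
  · rw [Nat.even_iff] at h
    omega
  · rw [Nat.odd_iff] at h
    omega

end GaussianIntegers

section QuarticJacobiSum

theorem jacobiSum_inv_inv {F : Type*} [Field F] [Fintype F] (χ ψ : MulChar F ℂ) :
    jacobiSum χ⁻¹ ψ⁻¹ = star (jacobiSum χ ψ) := by
  simp_rw [jacobiSum, star_sum, star_mul', MulChar.star_apply']

theorem norm_jacobiSum {F : Type*} [Field F] [Fintype F] {χ ψ : MulChar F GaussianInt}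
    (hχ : χ ≠ 1) (hψ : ψ ≠ 1) (hχψ : χ * ψ ≠ 1) :
    (jacobiSum χ ψ).norm = Fintype.card F := by
  have hinj := GaussianInt.toComplex_injective
  have hchar : ringChar ℂ ≠ ringChar F := by
    rw [ringChar.eq_zero]
    exact (CharP.ringChar_ne_zero_of_finite F).symm
  have h := jacobiSum_mul_jacobiSum_inv hchar ((MulChar.ringHomComp_ne_one_iff hinj).2 hχ)
    ((MulChar.ringHomComp_ne_one_iff hinj).2 hψ)
    (by rwa [← MulChar.ringHomComp_mul, MulChar.ringHomComp_ne_one_iff hinj])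
  rw [jacobiSum_inv_inv, jacobiSum_ringHomComp, Complex.star_def, ← GaussianInt.toComplex_star,
    ← map_mul, ← Zsqrtd.norm_eq_mul_conj, map_intCast] at h
  exact_mod_cast h

theorem ne_one_of_apply_ne_one {S R : Type*} [CommRing S] [CommRing R] {χ : MulChar S R} {u : Sˣ}
    (hu : χ u ≠ 1) : χ ≠ 1 := by
  rintro rfl
  exact hu (MulChar.one_apply_coe u)

variable {p f : ℕ} [Fact p.Prime] (hp : p = 4 * f + 1)
include hp

theorem ringChar_zmod_ne_two : ringChar (ZMod p) ≠ 2 := by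
  rw [ZMod.ringChar_zmod_n]
  omega

theorem quadraticChar_zmod_two : quadraticChar (ZMod p) 2 = (-1) ^ f := by
  have h2 : (2 : ZMod p) ≠ 0 := Ring.two_ne_zero (ringChar_zmod_ne_two hp)
  rcases f.even_or_odd with h | h
  · rw [h.neg_one_pow, quadraticChar_one_iff_isSquare h2, ZMod.exists_sq_eq_two_iff (by omega)]
    obtain ⟨k, rfl⟩ := h
    omega
  · rw [h.neg_one_pow, quadraticChar_neg_one_iff_not_isSquare, ZMod.exists_sq_eq_two_iff (by omega)]
    obtain ⟨k, rfl⟩ := h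
    omega

theorem legendreSym_two : legendreSym p 2 = (-1) ^ f := by
  rw [legendreSym, Int.cast_ofNat, quadraticChar_zmod_two hp]

variable {g : (ZMod p)ˣ} (hg : ∀ u, u ∈ Subgroup.zpowers g)
include hg

theorem generator_pow_two_mul : (g : ZMod p) ^ (2 * f) = -1 := by
  rw [← generator_pow_card_div_two hg (ringChar_zmod_ne_two hp), ZMod.card]
  congr 1
  omega

theorem mulChar_four {R : Type*} [CommRing R] {χ : MulChar (ZMod p) R} (hχ : χ g ^ 2 = -1) :
    χ 4 = (-1) ^ f := by
  rw [show (4 : ZMod p) = 2 ^ 2 by norm_num, map_pow, ← MulChar.pow_apply' χ two_ne_zero,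
    sq_eq_quadraticMulChar hg (ringChar_zmod_ne_two hp) hχ, quadraticMulChar_apply,
    quadraticChar_zmod_two hp, Int.cast_pow, Int.cast_neg, Int.cast_one]

theorem mulChar_neg_one {R : Type*} [CommRing R] {χ : MulChar (ZMod p) R} (hχ : χ g ^ 2 = -1) :
    χ (-1) = (-1) ^ f := by
  rw [← generator_pow_two_mul hp hg, map_pow, pow_mul, hχ]

theorem isPrimary_jacobiSum {χ : MulChar (ZMod p) GaussianInt} (hχ : χ g = ⟨0, 1⟩) :
    IsPrimary (-(-1) ^ f * jacobiSum χ χ) := by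
  have hF := ringChar_zmod_ne_two hp
  have hχsq : χ g ^ 2 = -1 := by
    rw [hχ]
    rfl
  have hρg : quadraticMulChar (ZMod p) GaussianInt g = -1 := by
    rw [quadraticMulChar_apply, quadraticChar_generator hg hF, Int.cast_neg, Int.cast_one]
  have hχ1 : χ ≠ 1 := ne_one_of_apply_ne_one (u := g) (by rw [hχ]; decide)
  have hρ1 : quadraticMulChar (ZMod p) GaussianInt ≠ 1 :=
    ne_one_of_apply_ne_one (u := g) (by rw [hρg]; decide)
  have hdvd := one_sub_mul_one_sub_dvd_card_add_jacobiSum hg hχ1 hρ1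
  rw [jacobiSum_quadraticMulChar hF hχ1, mulChar_four hp hg hχsq, hχ, hρg, ZMod.card,
    show (1 - ⟨0, 1⟩ : GaussianInt) * (1 - -1) = ⟨2, -2⟩ from rfl] at hdvd
  have hp1 : (⟨2, -2⟩ : GaussianInt) ∣ p - 1 :=
    ⟨⟨1, 1⟩ * f, by
      rw [← mul_assoc, show (⟨2, -2⟩ * ⟨1, 1⟩ : GaussianInt) = 4 from rfl, hp]
      push_cast
      ring⟩
  rw [IsPrimary, show -(-1) ^ f * jacobiSum χ χ - 1 =
    (p - 1) - (p + (-1) ^ f * jacobiSum χ χ) by ring]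
  exact dvd_sub hp1 hdvd

theorem exists_gaussianInt_ringHom_zmod :
    ∃ φ : GaussianInt →+* ZMod p, ∀ x y : ℤ, φ ⟨x, y⟩ = x + y * (g : ZMod p) ^ f :=
  ⟨Zsqrtd.lift ⟨(g : ZMod p) ^ f, by
    rw [← pow_add, ← two_mul, generator_pow_two_mul hp hg, Int.cast_neg, Int.cast_one]⟩,
    fun _ _ ↦ rfl⟩

theorem jacobiSum_gaussianInt {χ : MulChar (ZMod p) GaussianInt} (hχ : χ g = ⟨0, 1⟩) {a b : ℤ}
    (hab : a ^ 2 + b ^ 2 = p) (ha : a ≡ -legendreSym p 2 [ZMOD 4])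
    (hb : (b : ZMod p) = a * (g : ZMod p) ^ f) : jacobiSum χ χ = (-1) ^ f * ⟨a, b⟩ := by
  have hprime := Nat.prime_iff_prime_int.1 (Fact.out : p.Prime)
  have hf : f ≠ 0 := by
    rintro rfl
    exact (Fact.out : p.Prime).ne_one hp
  have hχ1 : χ ≠ 1 := ne_one_of_apply_ne_one (u := g) (by rw [hχ]; decide)
  have hχ2 : χ * χ ≠ 1 :=
    ne_one_of_apply_ne_one (u := g) (by rw [MulChar.mul_apply, hχ]; decide)
  have hJ : Irreducible (jacobiSum χ χ) :=
    irreducible_of_prime_norm (by rwa [norm_jacobiSum hχ1 hχ1 hχ2, ZMod.card])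
  have hπ : Irreducible (⟨a, b⟩ : GaussianInt) :=
    irreducible_of_prime_norm (by
      rwa [Zsqrtd.norm_def, show a * a - -1 * b * b = p by linarith])
  obtain ⟨φ, hφ⟩ := exists_gaussianInt_ringHom_zmod hp hg
  have hφJ : φ (jacobiSum χ χ) = 0 :=
    map_jacobiSum_eq_zero hg hf hf (by rw [ZMod.card]; omega) (by simp [hχ, hφ]) (by simp [hχ, hφ])
  have hφπ : φ ⟨a, b⟩ = 0 := by
    rw [hφ, hb, mul_assoc, ← pow_add, ← two_mul, generator_pow_two_mul hp hg]
    ring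
  have hassoc : Associated (-(-1) ^ f * jacobiSum χ χ) (-⟨a, b⟩) := by
    have hu : IsUnit (-(-1) ^ f : GaussianInt) := (isUnit_neg_one.pow f).neg
    have h := associated_of_map_eq_zero φ hJ hπ hφJ hφπ
    exact (associated_unit_mul_left _ _ hu).trans h.neg_right
  have hprim : IsPrimary (-⟨a, b⟩) :=
    isPrimary_neg_of_norm_eq (by rw [hab, hp]; push_cast; rfl) (by rwa [← legendreSym_two hp])
  have h := (isPrimary_jacobiSum hp hg hχ).eq_of_associated hprim hassoc
  have hsq : ((-1) ^ f * (-1) ^ f : GaussianInt) = 1 := by rw [← mul_pow]; simp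
  linear_combination -(-1) ^ f * h - jacobiSum χ χ * hsq

theorem exists_ringHomComp_toComplex {χ : MulChar (ZMod p) ℂ} (hχ : χ g = I) :
    ∃ χ' : MulChar (ZMod p) GaussianInt,
      χ' g = ⟨0, 1⟩ ∧ χ'.ringHomComp GaussianInt.toComplex = χ := by
  let ζ : GaussianIntˣ := ⟨⟨0, 1⟩, ⟨0, -1⟩, rfl, rfl⟩
  have hζ : ζ ∈ rootsOfUnity (Fintype.card (ZMod p)ˣ) GaussianInt := by
    have hζ4 : ζ ^ 4 = 1 := rfl
    rw [_root_.mem_rootsOfUnity, ZMod.card_units, hp, Nat.add_sub_cancel, pow_mul, hζ4, one_pow]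
  refine ⟨MulChar.ofRootOfUnity hζ hg, MulChar.ofRootOfUnity_spec hζ hg, ?_⟩
  rw [MulChar.eq_iff hg, MulChar.ringHomComp_apply, MulChar.ofRootOfUnity_spec, hχ,
    GaussianInt.toComplex_def']
  simp

theorem jacobiSum_quartic {χ : MulChar (ZMod p) ℂ} (hχ : χ g = I) {a b : ℤ}
    (hab : a ^ 2 + b ^ 2 = p) (ha : a ≡ -legendreSym p 2 [ZMOD 4])
    (hb : (b : ZMod p) = a * (g : ZMod p) ^ f) : jacobiSum χ χ = (-1) ^ f * (a + I * b) := by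
  obtain ⟨χ', hχ', rfl⟩ := exists_ringHomComp_toComplex hp hg hχ
  rw [jacobiSum_ringHomComp, jacobiSum_gaussianInt hp hg hχ' hab ha hb, map_mul,
    map_pow, map_neg, map_one, GaussianInt.toComplex_def', mul_comm I]

end QuarticJacobiSum

section PowerCosets

theorem exists_pow_eq_pow_add_mul_iff {M : Type*} [Monoid M] {g : M} (hg : IsOfFinOrder g)
    {i j e : ℕ} (he : e ∣ orderOf g) : (∃ k : ℕ, g ^ j = g ^ (i + e * k)) ↔ j ≡ i [MOD e] := by
  constructor
  · rintro ⟨k, hk⟩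
    exact ((hg.pow_eq_pow_iff_modEq.1 hk).of_dvd he).trans (by simp [Nat.ModEq])
  · intro hji
    have hle : i ≤ j + orderOf g * i :=
      (Nat.le_mul_of_pos_left i hg.orderOf_pos).trans (Nat.le_add_left _ _)
    have hshift : i ≡ j + orderOf g * i [MOD e] := by
      simpa using hji.symm.add ((Nat.modEq_zero_iff_dvd.2 (he.mul_right i)).symm)
    obtain ⟨k, hk⟩ := (Nat.modEq_iff_dvd' hle).1 hshift
    refine ⟨k, ?_⟩
    rw [← hk, Nat.add_sub_cancel' hle, pow_add, pow_mul, pow_orderOf_eq_one, one_pow, mul_one]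

theorem mul_modEq_iff_of_div_gcd_mul_modEq {n s h i j : ℕ} (hs : 0 < s) (hh : n.gcd s ∣ h)
    (hi : n / n.gcd s * i ≡ h / n.gcd s [MOD s / n.gcd s]) :
    n * j ≡ h [MOD s] ↔ j ≡ i [MOD s / n.gcd s] := by
  have hni : n * i ≡ h [MOD s] := by
    have hmul := hi.mul_left' (n.gcd s)
    rwa [← mul_assoc, Nat.mul_div_cancel' (Nat.gcd_dvd_left n s), Nat.mul_div_cancel' hh,
      Nat.mul_div_cancel' (Nat.gcd_dvd_right n s)] at hmul
  constructor
  · intro hnj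
    rw [Nat.gcd_comm]
    exact (hnj.trans hni.symm).cancel_left_div_gcd hs
  · intro hji
    have hdvd : s ∣ n * (s / n.gcd s) := by
      rw [← Nat.mul_div_assoc _ (Nat.gcd_dvd_right n s), mul_comm,
        Nat.mul_div_assoc _ (Nat.gcd_dvd_left n s)]
      exact dvd_mul_right _ _
    exact ((hji.mul_left' n).of_dvd hdvd).trans hni

variable {F : Type*} [Field F] [Finite F] {g : Fˣ} (hg : ∀ u, u ∈ Subgroup.zpowers g)
include hg

theorem exists_pow_eq_generator_pow_iff {n s h i : ℕ} (hn : n ≠ 0) (hs : s ∣ orderOf (g : F))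
    (hh : n.gcd s ∣ h) (hi : n / n.gcd s * i ≡ h / n.gcd s [MOD s / n.gcd s]) (z : F) :
    (∃ k : ℕ, z ^ n = (g : F) ^ (h + s * k)) ↔
      ∃ k : ℕ, z = (g : F) ^ (i + s / n.gcd s * k) := by
  have hfin : IsOfFinOrder (g : F) := Units.isOfFinOrder_val.2 (isOfFinOrder_of_finite g)
  rcases eq_or_ne z 0 with rfl | hz
  · simp [zero_pow hn, (pow_ne_zero _ g.ne_zero).symm]
  · obtain ⟨j, rfl⟩ := exists_pow_eq_of_ne_zero hg hz
    rw [← pow_mul, exists_pow_eq_pow_add_mul_iff hfin hs, exists_pow_eq_pow_add_mul_iff hfin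
      ((Nat.div_dvd_of_dvd (Nat.gcd_dvd_right n s)).trans hs), mul_comm,
      mul_modEq_iff_of_div_gcd_mul_modEq (Nat.pos_of_dvd_of_pos hs hfin.orderOf_pos) hh hi]

theorem sum_inv_pow_mul_mulChar_pow {χ : MulChar F ℂ} {e : ℕ} (hχ : IsPrimitiveRoot (χ g) e)
    (i : ℕ) (z : F) :
    ∑ r ∈ Finset.range e, (χ g ^ i)⁻¹ ^ r * (χ ^ r) z =
      if ∃ k : ℕ, z = (g : F) ^ (i + e * k) then (e : ℂ) else 0 := by
  have hfin : IsOfFinOrder (g : F) := Units.isOfFinOrder_val.2 (isOfFinOrder_of_finite g)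
  rcases eq_or_ne z 0 with rfl | hz
  · simp [MulChar.map_zero, (pow_ne_zero _ g.ne_zero).symm]
  have hζ : IsOfFinOrder (χ g) := χ.toMonoidHom.isOfFinOrder hfin
  have hi : χ g ^ i ≠ 0 := pow_ne_zero i (g.isUnit.map χ).ne_zero
  obtain ⟨j, rfl⟩ := exists_pow_eq_of_ne_zero hg hz
  have hcoset : (∃ k : ℕ, (g : F) ^ j = (g : F) ^ (i + e * k)) ↔ χ g ^ j / χ g ^ i = 1 := by
    have he : e ∣ orderOf (g : F) :=
      hχ.dvd_of_pow_eq_one _ (by rw [← map_pow, pow_orderOf_eq_one, map_one])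
    rw [exists_pow_eq_pow_add_mul_iff hfin he, div_eq_one_iff_eq hi, hζ.pow_eq_pow_iff_modEq,
      hχ.eq_orderOf]
  have hterm (r : ℕ) : (χ g ^ i)⁻¹ ^ r * (χ ^ r) ((g : F) ^ j) = (χ g ^ j / χ g ^ i) ^ r := by
    rw [map_pow, MulChar.pow_apply_coe, div_eq_inv_mul, mul_pow, pow_right_comm]
  have hroot : (χ g ^ j / χ g ^ i) ^ e = 1 := by
    rw [div_pow, pow_right_comm, pow_right_comm _ i, hχ.pow_eq_one, one_pow, one_pow, div_one]
  simp only [hterm, hcoset]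
  split_ifs with h
  · simp only [h, one_pow, Finset.sum_const, Finset.card_range, nsmul_one]
  · rw [geom_sum_eq h, hroot, sub_self, zero_div]

end PowerCosets

section Descent

theorem pow_card_eq_self_iff_mem_range {L K : Type*} [Field L] [Fintype L] [Field K] [Finite K]
    [Algebra L K] (x : K) : x ^ Fintype.card L = x ↔ x ∈ Set.range (algebraMap L K) := by
  constructor
  · intro hx
    rw [IsGalois.mem_range_algebraMap_iff_fixed]
    intro σ
    obtain ⟨i, rfl⟩ := (FiniteField.bijective_frobeniusAlgEquivOfAlgebraic_pow L K).2 σ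
    rw [AlgEquiv.coe_pow]
    exact Function.iterate_fixed hx _
  · rintro ⟨y, rfl⟩
    rw [← map_pow, FiniteField.pow_card]

variable {F L K : Type*} [Field F] [Field L] [Field K] [Algebra F L] [Algebra F K] [Algebra L K]
  [IsScalarTower F L K]

theorem trace_algebraMap_tower [FiniteDimensional F L] [FiniteDimensional L K] (y : L) :
    Algebra.trace F K (algebraMap L K y) = Module.finrank L K * Algebra.trace F L y := by
  rw [← Algebra.trace_trace (S := L), Algebra.trace_algebraMap, map_nsmul, nsmul_eq_mul]

theorem norm_algebraMap_tower [FiniteDimensional F L] [FiniteDimensional L K] (y : L) :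
    Algebra.norm F (algebraMap L K y) = Algebra.norm F y ^ Module.finrank L K := by
  rw [← Algebra.norm_norm (S := L), Algebra.norm_algebraMap, map_pow]

variable [Fintype F] [Fintype L] [Fintype K]

theorem NN_eq_card_filter {g a b : F} {s h : ℕ} (hn : (Module.finrank L K : F) ≠ 0)
    (hb : Module.finrank L K * b = a) :
    NN F K g s h (Module.finrank F L) a = Finset.card {y : L | Algebra.trace F L y = b ∧
      ∃ k : ℕ, Algebra.norm F y ^ Module.finrank L K = g ^ (h + s * k)} := by
  have himage : {x : K | x ^ Fintype.card F ^ Module.finrank F L = x ∧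
        Algebra.trace F K x = a ∧ ∃ k : ℕ, Algebra.norm F x = g ^ (h + s * k)} =
      algebraMap L K '' {y | Algebra.trace F L y = b ∧
        ∃ k : ℕ, Algebra.norm F y ^ Module.finrank L K = g ^ (h + s * k)} := by
    ext x
    rw [← Module.card_eq_pow_finrank, Set.mem_ofPred_eq, pow_card_eq_self_iff_mem_range]
    constructor
    · rintro ⟨⟨y, rfl⟩, htrace, hnorm⟩
      rw [trace_algebraMap_tower, ← hb] at htrace
      rw [norm_algebraMap_tower] at hnorm
      exact ⟨y, ⟨mul_left_cancel₀ hn htrace, hnorm⟩, rfl⟩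
    · rintro ⟨y, ⟨htrace, hnorm⟩, rfl⟩
      rw [trace_algebraMap_tower, norm_algebraMap_tower, htrace, hb]
      exact ⟨⟨y, rfl⟩, rfl, hnorm⟩
  have hcard := Nat.card_image_of_injective (algebraMap L K).injective
    {y | Algebra.trace F L y = b ∧ ∃ k : ℕ, Algebra.norm F y ^ Module.finrank L K = g ^ (h + s * k)}
  rw [← himage] at hcard
  exact hcard.trans (Nat.subtype_card _ fun y ↦ Finset.mem_filter_univ y)

end Descent

section Orthogonality

theorem two_mul_re_eq_add_star (z : ℂ) : 2 * (z.re : ℂ) = z + star z := by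
  rw [star_def, add_conj, ofReal_mul, ofReal_ofNat]

theorem four_dvd_orderOf {S : Type*} [CommRing S] {u : Sˣ} {χ : MulChar S ℂ} (hχ : χ u = I) :
    4 ∣ orderOf (u : S) :=
  isPrimitiveRoot_I.dvd_of_pow_eq_one _ (by rw [← hχ, ← map_pow, pow_orderOf_eq_one, map_one])

theorem mulChar_pow_four {F : Type*} [Field F] {g : Fˣ} (hg : ∀ u, u ∈ Subgroup.zpowers g)
    {χ : MulChar F ℂ} (hχ : χ g = I) : χ ^ 4 = 1 := by
  rw [MulChar.eq_iff hg, MulChar.pow_apply_coe, hχ, I_pow_four, MulChar.one_apply_coe]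

variable {F L K : Type*} [Field F] [Fintype F] [Field L] [Fintype L] [Algebra F L] [Field K]
  [Fintype K] [Algebra F K] {g : Fˣ} {χ : MulChar F ℂ} {a b : F} {h i n t : ℕ}
  (hg : ∀ u, u ∈ Subgroup.zpowers g) (hL : Module.finrank F L = t)
  (hK : Module.finrank F K = t * n) (hn : (n : F) ≠ 0) (hb : n * b = a)
include hg hL hK hn hb

theorem mul_NN_eq_sum_traceNormSum {s : ℕ} (hs : s ∣ orderOf (g : F))
    (hχ : IsPrimitiveRoot (χ g) (s / n.gcd s)) (hh : n.gcd s ∣ h)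
    (hi : n / n.gcd s * i ≡ h / n.gcd s [MOD s / n.gcd s]) :
    (s / n.gcd s : ℕ) * (NN F K g s h t a : ℂ) =
      ∑ r ∈ Finset.range (s / n.gcd s), (χ g ^ i)⁻¹ ^ r * traceNormSum L (χ ^ r) b := by
  obtain ⟨ι⟩ := FiniteField.nonempty_algHom_of_finrank_dvd (F := F) (K := L) (L := K)
    (by rw [hL, hK]; exact dvd_mul_right t n)
  algebraize [ι.toRingHom]
  have := IsScalarTower.of_algHom ι
  obtain rfl : Module.finrank L K = n := by
    have htower := Module.finrank_mul_finrank F L K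
    rw [hK, hL] at htower
    exact Nat.eq_of_mul_eq_mul_left (hL ▸ Module.finrank_pos) htower
  subst hL
  simp only [traceNormSum, Finset.mul_sum]
  rw [Finset.sum_comm]
  simp only [sum_inv_pow_mul_mulChar_pow hg hχ,
    ← exists_pow_eq_generator_pow_iff hg Module.finrank_pos.ne' hs hh hi]
  rw [NN_eq_card_filter hn hb, ← Finset.sum_filter, Finset.filter_filter, Finset.sum_const,
    nsmul_eq_mul, mul_comm]

theorem NN_four_of_gcd_eq_one (hχ : χ g = I) (hd : n.gcd 4 = 1) (hi : n * i ≡ h [MOD 4]) :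
    (NN F K g 4 h t a : ℂ) = 1 / 4 * (traceNormSum L (1 : MulChar F ℂ) b +
      (-1) ^ i * (traceNormSum L (χ ^ 2) b + 2 * ((traceNormSum L χ b * I ^ i).re : ℂ))) := by
  have hsum := mul_NN_eq_sum_traceNormSum (s := 4) (χ := χ) (h := h) (i := i) hg hL hK hn hb
    (four_dvd_orderOf hχ)
  simp only [hd, hχ, Nat.div_one, isPrimitiveRoot_I, one_dvd, hi, forall_const, Nat.cast_ofNat,
    Finset.sum_range_succ, Finset.sum_range_zero, pow_zero, pow_one, one_mul, zero_add] at hsum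
  have hcube : traceNormSum L (χ ^ 3) b = star (traceNormSum L χ b) := by
    rw [← traceNormSum_inv, eq_inv_of_mul_eq_one_left (a := χ ^ 3)]
    rw [← pow_succ, mulChar_pow_four hg hχ]
  have hstar : star (I ^ i) = (I ^ i)⁻¹ := by
    rw [star_pow, star_def, conj_I, ← inv_I, inv_pow]
  have hsq : (I ^ i)⁻¹ ^ 2 = (-1) ^ i := by
    rw [← inv_pow, pow_right_comm, inv_I, neg_sq, I_sq]
  have hmul : I ^ i * (I ^ i)⁻¹ = 1 := mul_inv_cancel₀ (pow_ne_zero i I_ne_zero)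
  rw [two_mul_re_eq_add_star, star_mul', hstar, ← hsq]
  linear_combination 1 / 4 * hsum + 1 / 4 * (I ^ i)⁻¹ ^ 3 * hcube -
    1 / 4 * (I ^ i)⁻¹ * traceNormSum L χ b * hmul

theorem NN_four_of_gcd_eq_two (hχ : χ g = I) (hd : n.gcd 4 = 2) (hh : 2 ∣ h)
    (hi : n / 2 * i ≡ h / 2 [MOD 2]) :
    (NN F K g 4 h t a : ℂ) = 1 / 2 * (traceNormSum L (1 : MulChar F ℂ) b +
      (-1) ^ i * traceNormSum L (χ ^ 2) b) := by
  have hroot : IsPrimitiveRoot (-1 : ℂ) 2 := IsPrimitiveRoot.neg_one 0 (by norm_num)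
  have hsum := mul_NN_eq_sum_traceNormSum (s := 4) (χ := χ ^ 2) (h := h) (i := i) hg hL hK hn hb
    (four_dvd_orderOf hχ)
  simp only [hd, MulChar.pow_apply_coe, hχ, I_sq, Nat.reduceDiv, hroot, hh, hi, forall_const,
    Nat.cast_ofNat, Finset.sum_range_succ, Finset.sum_range_zero, pow_zero, pow_one, one_mul,
    zero_add, ← inv_pow, inv_neg_one] at hsum
  linear_combination 1 / 2 * hsum

end Orthogonality

section QuarticCharacter

theorem mulChar_sq_ne_one {S : Type*} [CommRing S] {u : Sˣ} {χ : MulChar S ℂ} (hχ : χ u = I) :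
    χ ^ 2 ≠ 1 :=
  ne_one_of_apply_ne_one (u := u) (by rw [MulChar.pow_apply_coe, hχ, I_sq]; norm_num)

theorem ringChar_ne_two_of_mulChar_eq_I {F : Type*} [Field F] [Finite F] {u : Fˣ}
    {χ : MulChar F ℂ} (hχ : χ u = I) : ringChar F ≠ 2 := by
  have := Fintype.ofFinite F
  intro hF
  have heven := FiniteField.even_card_iff_char_two.1 hF
  have hdvd : 4 ∣ Fintype.card Fˣ :=
    (four_dvd_orderOf hχ).trans (orderOf_units (y := u) ▸ orderOf_dvd_card)
  rw [Fintype.card_units] at hdvd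
  have := Fintype.one_lt_card (α := F)
  omega

variable {F : Type*} [Field F] [Fintype F] {g : Fˣ} {χ : MulChar F ℂ} {c : F} {t : ℕ}
  (hg : ∀ u, u ∈ Subgroup.zpowers g) (hχ : χ g = I)
include hg hχ

theorem mulChar_sq_inv_neg [DecidableEq F] (c : F) : (χ ^ 2) (-c)⁻¹ = quadraticChar F c := by
  have hinv : (χ ^ 2)⁻¹ = χ ^ 2 :=
    inv_eq_of_mul_eq_one_left (by rw [← pow_add, mulChar_pow_four hg hχ])
  rw [← MulChar.inv_apply', hinv, mulChar_neg_apply, MulChar.pow_apply' _ two_ne_zero,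
    mulChar_neg_one_sq, one_mul,
    sq_eq_quadraticMulChar hg (ringChar_ne_two_of_mulChar_eq_I hχ) (by rw [hχ, I_sq]),
    quadraticMulChar_apply]

variable {L : Type*} [Field L] [Fintype L] [Algebra F L] (hc : c ≠ 0)
  (hL : Module.finrank F L = t)
include hc hL

theorem traceNormSum_sq_of_odd [DecidableEq F] (ht : Odd t) : traceNormSum L (χ ^ 2) (-c)⁻¹ =
    (Fintype.card F : ℂ) ^ ((t - 1) / 2) * quadraticChar F c := by
  obtain ⟨k, rfl⟩ := ht
  rw [traceNormSum_quadratic_odd (mulChar_sq_ne_one hχ)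
    (by rw [← pow_mul, mulChar_pow_four hg hχ]) (inv_ne_zero (neg_ne_zero.2 hc)) hL,
    MulChar.pow_apply' _ two_ne_zero, mulChar_neg_one_sq, one_mul, mulChar_sq_inv_neg hg hχ,
    Nat.add_sub_cancel, Nat.mul_div_cancel_left k two_pos]

theorem traceNormSum_sq_of_even (ht : Even t) :
    traceNormSum L (χ ^ 2) (-c)⁻¹ = (Fintype.card F : ℂ) ^ ((t - 2) / 2) := by
  have hpos : 0 < t := hL ▸ Module.finrank_pos
  obtain ⟨k, rfl⟩ : ∃ k, t = 2 * k + 2 := ⟨t / 2 - 1, by grind⟩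
  rw [traceNormSum_quadratic_even (mulChar_sq_ne_one hχ)
    (by rw [← pow_mul, mulChar_pow_four hg hχ]) (inv_ne_zero (neg_ne_zero.2 hc)) hL,
    MulChar.pow_apply' _ two_ne_zero, mulChar_neg_one_sq, one_mul, mul_one, Nat.add_sub_cancel,
    Nat.mul_div_cancel_left k two_pos]

theorem traceNormSum_of_mod_four_eq_one (ht : t % 4 = 1) : traceNormSum L χ (-c)⁻¹ =
    (Fintype.card F : ℂ) ^ ((t - 1) / 4) * jacobiSum χ χ ^ ((t - 1) / 2) * χ⁻¹ (-c) := by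
  rw [traceNormSum_quartic_one (k := (t - 1) / 4) (mulChar_pow_four hg hχ) (mulChar_sq_ne_one hχ)
    (inv_ne_zero (neg_ne_zero.2 hc)) (by omega), MulChar.inv_apply',
    show 2 * ((t - 1) / 4) = (t - 1) / 2 by omega]

theorem traceNormSum_of_mod_four_eq_three (ht : t % 4 = 3) : traceNormSum L χ (-c)⁻¹ =
    χ (-1) * (Fintype.card F : ℂ) ^ ((t - 3) / 4) * jacobiSum χ χ ^ ((t + 1) / 2) * χ (-c) := by
  rw [traceNormSum_quartic_three (k := (t - 3) / 4) (mulChar_pow_four hg hχ)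
    (mulChar_sq_ne_one hχ) (inv_ne_zero (neg_ne_zero.2 hc)) (by omega), MulChar.inv_apply',
    inv_inv, show 2 * ((t - 3) / 4) + 2 = (t + 1) / 2 by omega]

theorem traceNormSum_of_mod_four_eq_two [DecidableEq F] (ht : t % 4 = 2) :
    traceNormSum L χ (-c)⁻¹ =
      -((Fintype.card F : ℂ) ^ ((t - 2) / 4) * quadraticChar F c * jacobiSum χ χ ^ (t / 2)) := by
  rw [traceNormSum_quartic_two (k := (t - 2) / 4) (mulChar_pow_four hg hχ)
    (mulChar_sq_ne_one hχ) (inv_ne_zero (neg_ne_zero.2 hc)) (by omega),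
    mulChar_sq_inv_neg hg hχ, show 2 * ((t - 2) / 4) + 1 = t / 2 by omega, mul_right_comm]

theorem traceNormSum_of_four_dvd (ht : 4 ∣ t) : traceNormSum L χ (-c)⁻¹ =
    (Fintype.card F : ℂ) ^ ((t - 4) / 4) * jacobiSum χ χ ^ (t / 2) := by
  have hpos : 0 < t := hL ▸ Module.finrank_pos
  rw [traceNormSum_quartic_four (k := (t - 4) / 4) (mulChar_pow_four hg hχ)
    (mulChar_sq_ne_one hχ) (inv_ne_zero (neg_ne_zero.2 hc)) (by omega),
    show 2 * ((t - 4) / 4) + 2 = t / 2 by omega]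

end QuarticCharacter

section QuarticCount

theorem exists_field_finrank_eq_of_dvd {F K : Type*} [Field F] [Finite F] [Field K] [Finite K]
    [Algebra F K] {t : ℕ} (ht : t ∣ Module.finrank F K) :
    ∃ (L : Type) (_ : Field L) (_ : Fintype L) (_ : Algebra F L), Module.finrank F L = t := by
  have : Fact (ringChar F).Prime := ⟨CharP.char_is_prime F _⟩
  have : NeZero t := ⟨(Nat.pos_of_dvd_of_pos ht Module.finrank_pos).ne'⟩
  exact ⟨FiniteField.Extension F (ringChar F) t, inferInstance, Fintype.ofFinite _, inferInstance,
    FiniteField.finrank_extension F _ t⟩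

theorem finrank_eq_of_card_eq_pow {F K : Type*} [Field F] [Fintype F] [AddCommGroup K] [Fintype K]
    [Module F K] {m : ℕ} (hK : Fintype.card K = Fintype.card F ^ m) : Module.finrank F K = m :=
  Nat.pow_right_injective Fintype.one_lt_card (Module.card_eq_pow_finrank.symm.trans hK)

theorem mul_inv_neg_eq_of_eq_neg_mul_inv {F : Type*} [Field F] {n a c : F} (hn : n ≠ 0)
    (hc : c = -n * a⁻¹) : n * (-c)⁻¹ = a := by
  rw [hc, neg_mul, neg_neg, mul_inv, inv_inv, mul_inv_cancel_left₀ hn]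

theorem mod_four_eq_two_of_gcd_eq_two {t : ℕ} (ht : t.gcd 4 = 2) : t % 4 = 2 := by
  have h2 : 2 ∣ t := ht ▸ Nat.gcd_dvd_left t 4
  have h4 : ¬4 ∣ t := fun h ↦ by rw [Nat.gcd_eq_right h] at ht; omega
  omega

variable {F K : Type*} [Field F] [Fintype F] [Field K] [Fintype K] [Algebra F K] {g : Fˣ}
  {χ : MulChar F ℂ} {a c : F} {h i n t : ℕ} (hg : ∀ u, u ∈ Subgroup.zpowers g) (hχ : χ g = I)
  (hK : Module.finrank F K = t * n) (hn : (n : F) ≠ 0) (hc : c ≠ 0) (hca : n * (-c)⁻¹ = a)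
include hg hχ hK hn hc hca

theorem NN_four_of_gcd_eq_one_of_mod_four_eq_one [DecidableEq F] (hd : n.gcd 4 = 1)
    (hi : n * i ≡ h [MOD 4]) (ht : t % 4 = 1) :
    (NN F K g 4 h t a : ℂ) = 1 / 4 * ((Fintype.card F : ℂ) ^ (t - 1) +
      (-1) ^ i * ((Fintype.card F : ℂ) ^ ((t - 1) / 2) * quadraticChar F c +
        2 * (((Fintype.card F : ℂ) ^ ((t - 1) / 4) * jacobiSum χ χ ^ ((t - 1) / 2) * χ⁻¹ (-c) *
          I ^ i).re : ℂ))) := by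
  obtain ⟨L, _, _, _, hL⟩ := exists_field_finrank_eq_of_dvd (hK ▸ dvd_mul_right t n)
  rw [NN_four_of_gcd_eq_one hg hL hK hn hca hχ hd hi,
    traceNormSum_one (inv_ne_zero (neg_ne_zero.2 hc)), hL,
    traceNormSum_sq_of_odd hg hχ hc hL (Nat.odd_iff.2 (by omega)),
    traceNormSum_of_mod_four_eq_one hg hχ hc hL ht]

theorem NN_four_of_gcd_eq_one_of_mod_four_eq_three [DecidableEq F] (hd : n.gcd 4 = 1)
    (hi : n * i ≡ h [MOD 4]) (ht : t % 4 = 3) :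
    (NN F K g 4 h t a : ℂ) = 1 / 4 * ((Fintype.card F : ℂ) ^ (t - 1) +
      (-1) ^ i * ((Fintype.card F : ℂ) ^ ((t - 1) / 2) * quadraticChar F c +
        2 * ((χ (-1) * (Fintype.card F : ℂ) ^ ((t - 3) / 4) * jacobiSum χ χ ^ ((t + 1) / 2) *
          χ (-c) * I ^ i).re : ℂ))) := by
  obtain ⟨L, _, _, _, hL⟩ := exists_field_finrank_eq_of_dvd (hK ▸ dvd_mul_right t n)
  rw [NN_four_of_gcd_eq_one hg hL hK hn hca hχ hd hi,
    traceNormSum_one (inv_ne_zero (neg_ne_zero.2 hc)), hL,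
    traceNormSum_sq_of_odd hg hχ hc hL (Nat.odd_iff.2 (by omega)),
    traceNormSum_of_mod_four_eq_three hg hχ hc hL ht]

theorem NN_four_of_gcd_eq_one_of_mod_four_eq_two [DecidableEq F] (hd : n.gcd 4 = 1)
    (hi : n * i ≡ h [MOD 4]) (ht : t % 4 = 2) :
    (NN F K g 4 h t a : ℂ) = 1 / 4 * ((Fintype.card F : ℂ) ^ (t - 1) +
      (-1) ^ i * (Fintype.card F : ℂ) ^ ((t - 2) / 4) * ((Fintype.card F : ℂ) ^ ((t - 2) / 4) -
        2 * quadraticChar F c * ((jacobiSum χ χ ^ (t / 2) * I ^ i).re : ℂ))) := by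
  obtain ⟨L, _, _, _, hL⟩ := exists_field_finrank_eq_of_dvd (hK ▸ dvd_mul_right t n)
  have hre : (traceNormSum L χ (-c)⁻¹ * I ^ i).re = -((Fintype.card F : ℝ) ^ ((t - 2) / 4) *
      quadraticChar F c * (jacobiSum χ χ ^ (t / 2) * I ^ i).re) := by
    rw [traceNormSum_of_mod_four_eq_two hg hχ hc hL ht, ← re_ofReal_mul, ← neg_re]
    push_cast
    ring_nf
  rw [NN_four_of_gcd_eq_one hg hL hK hn hca hχ hd hi,
    traceNormSum_one (inv_ne_zero (neg_ne_zero.2 hc)), hL,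
    traceNormSum_sq_of_even hg hχ hc hL (Nat.even_iff.2 (by omega)), hre,
    show (t - 2) / 2 = (t - 2) / 4 + (t - 2) / 4 by omega]
  push_cast
  ring

theorem NN_four_of_gcd_eq_one_of_four_dvd (hd : n.gcd 4 = 1) (hi : n * i ≡ h [MOD 4])
    (ht : 4 ∣ t) :
    (NN F K g 4 h t a : ℂ) = 1 / 4 * ((Fintype.card F : ℂ) ^ (t - 1) +
      (-1) ^ i * (Fintype.card F : ℂ) ^ ((t - 4) / 4) * ((Fintype.card F : ℂ) ^ (t / 4) +
        2 * ((jacobiSum χ χ ^ (t / 2) * I ^ i).re : ℂ))) := by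
  obtain ⟨L, _, _, _, hL⟩ := exists_field_finrank_eq_of_dvd (hK ▸ dvd_mul_right t n)
  have hpos : 0 < t := hL ▸ Module.finrank_pos
  have hre : (traceNormSum L χ (-c)⁻¹ * I ^ i).re = (Fintype.card F : ℝ) ^ ((t - 4) / 4) *
      (jacobiSum χ χ ^ (t / 2) * I ^ i).re := by
    rw [traceNormSum_of_four_dvd hg hχ hc hL ht, ← re_ofReal_mul, ofReal_pow, ofReal_natCast,
      mul_assoc]
  rw [NN_four_of_gcd_eq_one hg hL hK hn hca hχ hd hi,
    traceNormSum_one (inv_ne_zero (neg_ne_zero.2 hc)), hL,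
    traceNormSum_sq_of_even hg hχ hc hL (Nat.even_iff.2 (by omega)), hre,
    show (t - 2) / 2 = (t - 4) / 4 + t / 4 by omega]
  push_cast
  ring

theorem NN_four_of_gcd_eq_two_of_odd [DecidableEq F] (hd : n.gcd 4 = 2) (hh : 2 ∣ h)
    (hi : n / 2 * i ≡ h / 2 [MOD 2]) (ht : Odd t) :
    (NN F K g 4 h t a : ℂ) = 1 / 2 * ((Fintype.card F : ℂ) ^ (t - 1) +
      (-1) ^ i * (Fintype.card F : ℂ) ^ ((t - 1) / 2) * quadraticChar F c) := by
  obtain ⟨L, _, _, _, hL⟩ := exists_field_finrank_eq_of_dvd (hK ▸ dvd_mul_right t n)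
  rw [NN_four_of_gcd_eq_two hg hL hK hn hca hχ hd hh hi,
    traceNormSum_one (inv_ne_zero (neg_ne_zero.2 hc)), hL,
    traceNormSum_sq_of_odd hg hχ hc hL ht, mul_assoc ((-1) ^ i)]

theorem NN_four_of_gcd_eq_two_of_even (hd : n.gcd 4 = 2) (hh : 2 ∣ h)
    (hi : n / 2 * i ≡ h / 2 [MOD 2]) (ht : Even t) :
    (NN F K g 4 h t a : ℂ) = 1 / 2 * ((Fintype.card F : ℂ) ^ (t - 1) +
      (-1) ^ i * (Fintype.card F : ℂ) ^ ((t - 2) / 2)) := by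
  obtain ⟨L, _, _, _, hL⟩ := exists_field_finrank_eq_of_dvd (hK ▸ dvd_mul_right t n)
  rw [NN_four_of_gcd_eq_two hg hL hK hn hca hχ hd hh hi,
    traceNormSum_one (inv_ne_zero (neg_ne_zero.2 hc)), hL,
    traceNormSum_sq_of_even hg hχ hc hL ht]

theorem NN_four_of_gcd_eq_four (hd : n.gcd 4 = 4) (hh : 4 ∣ h) :
    (NN F K g 4 h t a : ℂ) = (Fintype.card F : ℂ) ^ (t - 1) := by
  obtain ⟨L, _, _, _, hL⟩ := exists_field_finrank_eq_of_dvd (hK ▸ dvd_mul_right t n)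
  have hsum := mul_NN_eq_sum_traceNormSum (χ := 1) (h := h) (i := 0) hg hL hK hn hca
    (four_dvd_orderOf hχ)
  subst hL
  rw [← traceNormSum_one (inv_ne_zero (neg_ne_zero.2 hc))]
  simpa [hd, hh, Nat.modEq_one] using hsum

end QuarticCount

/-- The values of `N_t` for `s = 4`, `q = p ≡ 1 (mod 4)` and `a ≠ 0`, assuming
`p ∤ m/t` and `d ∣ h`, in terms of `π_4 = (−1)^f·(a_4 + i·b_4)`, the quadratic
character `ρ` of `F_p`, the quartic character `χ_4`, and `Q_{t,4}`. -/
theorem stmt12 (p m h t d l i0 f : ℕ) [Fact p.Prime] (hm : 2 ≤ m)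
    (ht : t ∣ m) (ht0 : 0 < t)
    (K : Type*) [Field K] [Fintype K] [Algebra (ZMod p) K]
    (hK : Fintype.card K = p ^ m)
    (hp : p = 4 * f + 1)
    (g : (ZMod p)ˣ) (hg : ∀ u : (ZMod p)ˣ, u ∈ Subgroup.zpowers g)
    (hh : h < 4)
    (χ4 : MulChar (ZMod p) ℂ) (hχ4o : orderOf χ4 = 4) (hχ4g : χ4 (g : ZMod p) = Complex.I)
    (a4 b4 : ℤ) (hab : a4 ^ 2 + b4 ^ 2 = (p : ℤ))
    (ha4 : a4 ≡ -legendreSym p 2 [ZMOD 4])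
    (hb4 : (b4 : ZMod p) = (a4 : ZMod p) * (g : ZMod p) ^ ((p - 1) / 4))
    (π4 : ℂ) (hπ4 : π4 = (-1 : ℂ) ^ f * ((a4 : ℂ) + Complex.I * (b4 : ℂ)))
    (hd : d = Nat.gcd (m / t) 4) (hl : l = Nat.gcd t (4 / d))
    (hpmt : ¬ p ∣ m / t) (hdh : d ∣ h)
    (hi0 : i0 < 4 / d ∧ (m / (d * t)) * i0 ≡ h / d [MOD 4 / d])
    (a : ZMod p) (ha : a ≠ 0)
    (a0 : ZMod p) (ha0 : a0 = -(((m / t : ℕ) : ZMod p)) * a⁻¹) :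
    (d = 1 ∧ l = 1 ∧ t % 4 = 1 →
      (NN (ZMod p) K (g : ZMod p) 4 h t a : ℂ) =
        (1 / 4) * ((p : ℂ) ^ (t - 1) +
          (-1 : ℂ) ^ i0 * ((p : ℂ) ^ ((t - 1) / 2) * (quadraticChar (ZMod p) a0 : ℂ) +
            2 * (((p : ℂ) ^ ((t - 1) / 4) * π4 ^ ((t - 1) / 2) * χ4⁻¹ (-a0) *
              Complex.I ^ i0).re : ℂ)))) ∧
    (d = 1 ∧ l = 1 ∧ t % 4 = 3 →
      (NN (ZMod p) K (g : ZMod p) 4 h t a : ℂ) =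
        (1 / 4) * ((p : ℂ) ^ (t - 1) +
          (-1 : ℂ) ^ i0 * ((p : ℂ) ^ ((t - 1) / 2) * (quadraticChar (ZMod p) a0 : ℂ) +
            2 * (((-1 : ℂ) ^ f * (p : ℂ) ^ ((t - 3) / 4) * π4 ^ ((t + 1) / 2) * χ4 (-a0) *
              Complex.I ^ i0).re : ℂ)))) ∧
    (d = 1 ∧ l = 2 →
      (NN (ZMod p) K (g : ZMod p) 4 h t a : ℂ) =
        (1 / 4) * ((p : ℂ) ^ (t - 1) +
          (-1 : ℂ) ^ i0 * (p : ℂ) ^ ((t - 2) / 4) * ((p : ℂ) ^ ((t - 2) / 4) -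
            2 * (quadraticChar (ZMod p) a0 : ℂ) *
              ((π4 ^ (t / 2) * Complex.I ^ i0).re : ℂ)))) ∧
    (d = 1 ∧ l = 4 →
      (NN (ZMod p) K (g : ZMod p) 4 h t a : ℂ) =
        (1 / 4) * ((p : ℂ) ^ (t - 1) +
          (-1 : ℂ) ^ i0 * (p : ℂ) ^ ((t - 4) / 4) * ((p : ℂ) ^ (t / 4) +
            2 * ((π4 ^ (t / 2) * Complex.I ^ i0).re : ℂ)))) ∧
    (d = 2 ∧ l = 1 →
      (NN (ZMod p) K (g : ZMod p) 4 h t a : ℂ) =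
        (1 / 2) * ((p : ℂ) ^ (t - 1) +
          (-1 : ℂ) ^ i0 * (p : ℂ) ^ ((t - 1) / 2) * (quadraticChar (ZMod p) a0 : ℂ))) ∧
    (d = 2 ∧ l = 2 →
      (NN (ZMod p) K (g : ZMod p) 4 h t a : ℂ) =
        (1 / 2) * ((p : ℂ) ^ (t - 1) + (-1 : ℂ) ^ i0 * (p : ℂ) ^ ((t - 2) / 2))) ∧
    (d = 4 ∧ l = 1 →
      (NN (ZMod p) K (g : ZMod p) 4 h t a : ℂ) = (p : ℂ) ^ (t - 1)) := by
  have hfin : Module.finrank (ZMod p) K = t * (m / t) := by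
    rw [Nat.mul_div_cancel' ht, finrank_eq_of_card_eq_pow (by rw [hK, ZMod.card])]
  have hn : ((m / t : ℕ) : ZMod p) ≠ 0 := by rwa [Ne, ZMod.natCast_eq_zero_iff]
  have hc : a0 ≠ 0 := ha0 ▸ mul_ne_zero (neg_ne_zero.2 hn) (inv_ne_zero ha)
  have hca := mul_inv_neg_eq_of_eq_neg_mul_inv hn ha0
  rw [show (p - 1) / 4 = f by omega] at hb4
  rw [mul_comm d, ← Nat.div_div_eq_div_mul] at hi0
  rw [hπ4, ← jacobiSum_quartic hp hg hχ4g hab ha4 hb4, ← mulChar_neg_one hp hg (χ := χ4)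
    (by rw [hχ4g, I_sq]), show (p : ℂ) = Fintype.card (ZMod p) by rw [ZMod.card]]
  refine ⟨?_, ?_, ?_, ?_, ?_, ?_, ?_⟩
  · rintro ⟨rfl, -, ht⟩
    exact NN_four_of_gcd_eq_one_of_mod_four_eq_one hg hχ4g hfin hn hc hca hd.symm
      (by simpa using hi0.2) ht
  · rintro ⟨rfl, -, ht⟩
    exact NN_four_of_gcd_eq_one_of_mod_four_eq_three hg hχ4g hfin hn hc hca hd.symm
      (by simpa using hi0.2) ht
  · rintro ⟨rfl, rfl⟩
    exact NN_four_of_gcd_eq_one_of_mod_four_eq_two hg hχ4g hfin hn hc hca hd.symm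
      (by simpa using hi0.2) (mod_four_eq_two_of_gcd_eq_two hl.symm)
  · rintro ⟨rfl, rfl⟩
    exact NN_four_of_gcd_eq_one_of_four_dvd hg hχ4g hfin hn hc hca hd.symm
      (by simpa using hi0.2) (Nat.gcd_eq_right_iff_dvd.1 hl.symm)
  · rintro ⟨rfl, rfl⟩
    exact NN_four_of_gcd_eq_two_of_odd hg hχ4g hfin hn hc hca hd.symm hdh hi0.2
      (Nat.coprime_two_right.1 hl.symm)
  · rintro ⟨rfl, rfl⟩
    exact NN_four_of_gcd_eq_two_of_even hg hχ4g hfin hn hc hca hd.symm hdh hi0.2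
      (even_iff_two_dvd.2 (Nat.gcd_eq_right_iff_dvd.1 hl.symm))
  · rintro ⟨rfl, -⟩
    exact NN_four_of_gcd_eq_four hg hχ4g hfin hn hc hca hd.symm hdh

end
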